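/- arXiv:1606.05139 — 6 statements merged into one kernel-verified Lean document; each statement's English description precedes it below -/
import Mathlib

section
/- Let u : ℝ × ℝ → ℝ be a continuous function such that for every n ≥ 1 the map (x,y) ↦ det[u(x_i,y_j)]_{i,j=1}^n/(Δ_n(x)·Δ_n(y)), defined for x, y ∈ ℝ^n each with pairwise distinct coordinates, extends to a strictly positive continuous function M_n on ℝ^n × ℝ^n. Define τ_0 ≡ 1 and, for n ≥ 1, τ_n(x,y) = c_n^{-2}·M_n(x·1_n, y·1_n). Then the functions (τ_n; n ≥ 1) satisfy the two-dimensional Toda equations in integrated form: for every n ≥ 1 and all a, b, c, d ∈ ℝ, log( τ_n(a,c)·τ_n(b,d) / (τ_n(a,d)·τ_n(b,c)) ) = ∫_a^b ∫_c^d τ_{n−1}(x,y)·τ_{n+1}(x,y)/τ_n(x,y)^2 dy dx. -/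
open Finset MeasureTheory

/-- Vandermonde determinant Δ_n(x) = ∏_{i<j} (x_i - x_j). -/
noncomputable def vdm {n : ℕ} (x : Fin n → ℝ) : ℝ :=
  ∏ i, ∏ j ∈ Finset.Ioi i, (x i - x j)

/-- c_n⁻¹ = ∏_{i=1}^{n-1} i!. -/
noncomputable def cInv (n : ℕ) : ℝ := ∏ i ∈ Finset.range n, (Nat.factorial i : ℝ)

/-- `M` is a continuous extension to ℝ^n × ℝ^n of the ratio
det[u(x_i,y_j)]/(Δ_n(x)·Δ_n(y)), which is defined for `x`, `y` each with pairwise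
distinct coordinates. -/
def ExtendsRatio2 (n : ℕ) (u : ℝ → ℝ → ℝ) (M : (Fin n → ℝ) → (Fin n → ℝ) → ℝ) : Prop :=
  Continuous (fun p : (Fin n → ℝ) × (Fin n → ℝ) => M p.1 p.2) ∧
  ∀ x y : Fin n → ℝ, Function.Injective x → Function.Injective y →
    M x y = Matrix.det (Matrix.of fun i j => u (x i) (y j)) / (vdm x * vdm y)


/-!
After clearing the Vandermonde factors, the Desnanot–Jacobi identity for the matrix `[u(x_i, y_j)]`
reads, at distinct points and hence everywhere by continuity,

`(p - q) (r - t) M_{m+2}(p,q,X; r,t,Y) M_m(X; Y)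
  = M_{m+1}(p,X; r,Y) M_{m+1}(q,X; t,Y) - M_{m+1}(p,X; t,Y) M_{m+1}(q,X; r,Y)`.

As `M_{m+1}` is symmetric in each set of variables, moving the coordinates one at a time turns such
a formula for the effect of a single coordinate into a derivative along the diagonal, although `u`
is only continuous. This is done first in `y`, for `log (M_{m+1}(p,X; y) / M_{m+1}(q,X; y))`, and
then, after integrating over `y`, in `x`. The two factors `m + 1` produced in this way account for
the normalization of `τ_n`.
-/

section Determinants

open Matrix

variable {R : Type*} [CommRing R]

theorem det_mul_det_toBlocks₁₁_adjugate {m n : Type*} [Fintype m] [DecidableEq m] [Fintype n]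
    [DecidableEq n] (A : Matrix (m ⊕ n) (m ⊕ n) R) :
    A.det * A.adjugate.toBlocks₁₁.det = A.det ^ Fintype.card m * A.toBlocks₂₂.det := by
  have hprod : A * fromBlocks A.adjugate.toBlocks₁₁ 0 A.adjugate.toBlocks₂₁ 1 =
      fromBlocks (A.det • 1) A.toBlocks₁₂ 0 A.toBlocks₂₂ := by
    have hadj := A.mul_adjugate
    rw [← fromBlocks_toBlocks A, ← fromBlocks_toBlocks (adjugate _), fromBlocks_multiply,
      fromBlocks_toBlocks, ← fromBlocks_one, fromBlocks_smul, fromBlocks_inj] at hadj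
    nth_rw 1 [← fromBlocks_toBlocks A]
    rw [fromBlocks_multiply, hadj.1, hadj.2.2.1]
    simp only [Matrix.mul_zero, Matrix.mul_one, zero_add, smul_zero]
  have hdet := congrArg det hprod
  rwa [det_mul, det_fromBlocks_zero₁₂, det_one, mul_one, det_fromBlocks_zero₂₁, det_smul,
    det_one, mul_one] at hdet

theorem det_toBlocks₁₁_adjugate {m n : Type*} [Fintype m] [DecidableEq m] [Nonempty m]
    [Fintype n] [DecidableEq n] (A : Matrix (m ⊕ n) (m ⊕ n) R) :
    A.adjugate.toBlocks₁₁.det = A.det ^ (Fintype.card m - 1) * A.toBlocks₂₂.det := by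
  -- `det A` can be cancelled for the generic matrix, which then specializes to `A`.
  let G := mvPolynomialX (m ⊕ n) (m ⊕ n) ℤ
  have hG : G.adjugate.toBlocks₁₁.det = G.det ^ (Fintype.card m - 1) * G.toBlocks₂₂.det := by
    apply mul_left_cancel₀ (det_mvPolynomialX_ne_zero (m ⊕ n) ℤ)
    rw [det_mul_det_toBlocks₁₁_adjugate, ← mul_assoc, mul_pow_sub_one Fintype.card_ne_zero]
  let φ := MvPolynomial.aeval (R := ℤ) fun p : (m ⊕ n) × (m ⊕ n) => A p.1 p.2
  have hA : φ.mapMatrix G = A := mvPolynomialX_mapMatrix_aeval ℤ A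
  have hφ := congrArg φ hG
  rw [map_mul, map_pow] at hφ
  simp only [AlgHom.map_det] at hφ
  rw [hA] at hφ
  have hadj : φ.mapMatrix G.adjugate.toBlocks₁₁ = A.adjugate.toBlocks₁₁ := by
    rw [← hA, ← AlgHom.map_adjugate]; rfl
  have hsub : φ.mapMatrix G.toBlocks₂₂ = A.toBlocks₂₂ := by
    rw [← hA]; rfl
  rwa [hadj, hsub] at hφ

theorem desnanot_jacobi {n : ℕ} (A : Matrix (Fin (n + 2)) (Fin (n + 2)) R) :
    A.det * (A.submatrix (Fin.succ ∘ Fin.succ) (Fin.succ ∘ Fin.succ)).det =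
      (A.submatrix (Fin.succAbove 1) (Fin.succAbove 1)).det *
          (A.submatrix Fin.succ Fin.succ).det -
        (A.submatrix (Fin.succAbove 1) Fin.succ).det *
          (A.submatrix Fin.succ (Fin.succAbove 1)).det := by
  let e : Fin 2 ⊕ Fin n ≃ Fin (n + 2) := finSumFinEquiv.trans (finCongr (add_comm 2 n))
  have he₀ : e (Sum.inl 0) = 0 := rfl
  have he₁ : e (Sum.inl 1) = 1 := by ext; simp [e]
  have he₂ : e ∘ Sum.inr = Fin.succ ∘ Fin.succ := by ext i; simp [e]
  have hminor := det_toBlocks₁₁_adjugate (A.submatrix e e)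
  have hsub : (A.submatrix e e).toBlocks₂₂ =
      A.submatrix (Fin.succ ∘ Fin.succ) (Fin.succ ∘ Fin.succ) := by
    rw [← he₂]; rfl
  rw [hsub, adjugate_submatrix_equiv_self, det_submatrix_equiv_self, Fintype.card_fin,
    pow_one] at hminor
  rw [← hminor, det_fin_two]
  simp only [toBlocks₁₁, of_apply, submatrix_apply, he₀, he₁,
    adjugate_fin_succ_eq_det_submatrix, Fin.succAbove_zero, Fin.val_zero, Fin.val_one]
  ring

end Determinants

theorem dense_setOf_injective {ι 𝕜 : Type*} [Countable ι] [NontriviallyNormedField 𝕜]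
    [CompleteSpace 𝕜] : Dense {x : ι → 𝕜 | Function.Injective x} := by
  classical
  have hne (i j : ι) (hij : i ≠ j) : Dense {x : ι → 𝕜 | x i ≠ x j} := by
    let H : Submodule 𝕜 (ι → 𝕜) :=
      (LinearMap.proj (R := 𝕜) (φ := fun _ : ι => 𝕜) i - LinearMap.proj j).ker
    have hH : (H : Set (ι → 𝕜))ᶜ = {x | x i ≠ x j} := by
      ext x
      simp [H, sub_eq_zero]
    rw [← hH, ← interior_eq_empty_iff_dense_compl, ← Set.not_nonempty_iff_eq_empty]
    intro hint
    have hmem : Pi.single i 1 ∈ H := by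
      rw [H.eq_top_of_nonempty_interior' hint]
      exact Submodule.mem_top
    simp [H, hij.symm] at hmem
  have hinter : {x : ι → 𝕜 | Function.Injective x} =
      ⋂ p : {p : ι × ι // p.1 ≠ p.2}, {x | x p.1.1 ≠ x p.1.2} := by
    ext x
    simp [Function.Injective, not_imp_not]
  rw [hinter]
  exact dense_iInter_of_isOpen
    (fun p => isOpen_ne_fun (continuous_apply p.1.1) (continuous_apply p.1.2))
    fun p => hne _ _ p.2

theorem eq_of_eq_on_injective {ι κ 𝕜 Z : Type*} [Countable ι] [Countable κ]
    [NontriviallyNormedField 𝕜] [CompleteSpace 𝕜] [TopologicalSpace Z] [T2Space Z]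
    {f g : (ι → 𝕜) × (κ → 𝕜) → Z} (hf : Continuous f) (hg : Continuous g)
    (h : ∀ x y, Function.Injective x → Function.Injective y → f (x, y) = g (x, y)) : f = g :=
  hf.ext_on (dense_setOf_injective.prod dense_setOf_injective) hg fun _ hp => h _ _ hp.1 hp.2

theorem sub_eq_sum_insertNth_sub {α G : Type*} [AddCommGroup G] {m : ℕ}
    (F : (Fin (m + 1) → α) → G) (p q : α) :
    F (fun _ => p) - F (fun _ => q) = ∑ k : Fin (m + 1),
      (F (k.insertNth p fun i => if (i : ℕ) < k then p else q) -
        F (k.insertNth q fun i => if (i : ℕ) < k then p else q)) := by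
  let Z (k : ℕ) : Fin (m + 1) → α := fun i => if (i : ℕ) < k then p else q
  have hp (k : Fin (m + 1)) :
      (k.insertNth p fun i => if (i : ℕ) < k then p else q : Fin (m + 1) → α) = Z (k + 1) := by
    refine Fin.insertNth_eq_iff.2 ⟨by simp [Z], funext fun i => ?_⟩
    grind [Fin.removeNth, Fin.succAbove]
  have hq (k : Fin (m + 1)) :
      (k.insertNth q fun i => if (i : ℕ) < k then p else q : Fin (m + 1) → α) = Z k := by
    refine Fin.insertNth_eq_iff.2 ⟨by simp [Z], funext fun i => ?_⟩
    grind [Fin.removeNth, Fin.succAbove]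
  have hZ₀ : Z 0 = fun _ => q := by simp [Z]
  have hZ₁ : Z (m + 1) = fun _ => p := by ext i; simp [Z, i.is_lt]
  simp only [hp, hq]
  rw [Fin.sum_univ_eq_sum_range fun k => F (Z (k + 1)) - F (Z k),
    Finset.sum_range_sub fun k => F (Z k), hZ₀, hZ₁]

theorem hasDerivAt_comp_diagonal {𝕜 E : Type*} [NontriviallyNormedField 𝕜]
    [NormedAddCommGroup E] [NormedSpace 𝕜 E] {m : ℕ} {F : (Fin (m + 1) → 𝕜) → E}
    (hF : ∀ (σ : Equiv.Perm (Fin (m + 1))) (x), F (x ∘ σ) = F x)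
    {K : 𝕜 → 𝕜 → (Fin m → 𝕜) → E}
    (hK : Continuous fun z : 𝕜 × 𝕜 × (Fin m → 𝕜) => K z.1 z.2.1 z.2.2)
    (hFK : ∀ p q X, F (Fin.cons p X) - F (Fin.cons q X) = (p - q) • K p q X) (x : 𝕜) :
    HasDerivAt (fun t => F fun _ => t) ((m + 1 : 𝕜) • K x x fun _ => x) x := by
  let X (t : 𝕜) (k : Fin (m + 1)) : Fin m → 𝕜 := fun i => if (i : ℕ) < k then t else x
  let S (t : 𝕜) : E := ∑ k, K t x (X t k)
  have hinsert (k : Fin (m + 1)) (p : 𝕜) (Y : Fin m → 𝕜) :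
      F (k.insertNth p Y) = F (Fin.cons p Y) := by
    rw [← Fin.insertNth_comp_cycleRange_symm k, hF]
  have hS (t : 𝕜) : F (fun _ => t) - F (fun _ => x) = (t - x) • S t := by
    simp only [sub_eq_sum_insertNth_sub F t x, hinsert, hFK, S, X, Finset.smul_sum]
  have hS_cont : Continuous S := by
    refine continuous_finsetSum _ fun k _ => hK.comp (f := fun t => (t, x, X t k)) ?_
    refine continuous_id.prodMk (continuous_const.prodMk (continuous_pi fun i => ?_))
    dsimp only [X]
    split_ifs <;> fun_prop
  have hSx : S x = (m + 1 : 𝕜) • K x x fun _ => x := by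
    simp [S, X, ← Nat.cast_smul_eq_nsmul 𝕜]
  rw [hasDerivAt_iff_tendsto_slope, ← hSx]
  refine ((hS_cont.tendsto x).mono_left nhdsWithin_le_nhds).congr' ?_
  filter_upwards [self_mem_nhdsWithin] with t ht
  rw [slope_def_module, hS, inv_smul_smul₀ (sub_ne_zero.2 ht)]

theorem vdm_eq_det_vandermonde {n : ℕ} (x : Fin n → ℝ) :
    vdm x = (Matrix.vandermonde (-x)).det := by
  simp only [vdm, Matrix.det_vandermonde, Pi.neg_apply, neg_sub_neg]

theorem vdm_ne_zero {n : ℕ} {x : Fin n → ℝ} (hx : Function.Injective x) : vdm x ≠ 0 := by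
  rw [vdm_eq_det_vandermonde, Matrix.det_vandermonde_ne_zero_iff]
  exact neg_injective.comp hx

theorem vdm_comp_perm {n : ℕ} (σ : Equiv.Perm (Fin n)) (x : Fin n → ℝ) :
    vdm (x ∘ σ) = (Equiv.Perm.sign σ : ℤ) * vdm x := by
  rw [vdm_eq_det_vandermonde, vdm_eq_det_vandermonde, ← Matrix.det_permute]
  rfl

theorem vdm_succ {n : ℕ} (x : Fin (n + 1) → ℝ) :
    vdm x = (∏ j : Fin n, (x 0 - x j.succ)) * vdm (x ∘ Fin.succ) := by
  simp only [vdm, Fin.prod_univ_succ, Fin.prod_Ioi_zero, Fin.prod_Ioi_succ, Function.comp_apply]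

theorem vdm_mul_vdm_tail_tail {n : ℕ} (x : Fin (n + 2) → ℝ) :
    vdm x * vdm (x ∘ Fin.succ ∘ Fin.succ) =
      (x 0 - x 1) * vdm (x ∘ Fin.succAbove 1) * vdm (x ∘ Fin.succ) := by
  rw [vdm_succ x, vdm_succ (x ∘ Fin.succAbove 1), Fin.prod_univ_succ]
  simp only [Function.comp_def, Fin.one_succAbove_zero, Fin.one_succAbove_succ,
    Fin.succ_zero_eq_one]
  ring

/-- The matrix `[u(x_i, y_j)]` of a kernel `u` sampled at the points `x` and `y`, whose
determinant is the numerator of the ratio in `ExtendsRatio2`. -/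
def kernelMatrix {X Y R ι κ : Type*} (u : X → Y → R) (x : ι → X) (y : κ → Y) : Matrix ι κ R :=
  Matrix.of fun i j => u (x i) (y j)

theorem kernelMatrix_submatrix {X Y R ι κ ι' κ' : Type*} (u : X → Y → R) (x : ι → X)
    (y : κ → Y) (f : ι' → ι) (g : κ' → κ) :
    (kernelMatrix u x y).submatrix f g = kernelMatrix u (x ∘ f) (y ∘ g) :=
  rfl

namespace ExtendsRatio2

theorem zero {u : ℝ → ℝ → ℝ} : ExtendsRatio2 0 u fun _ _ => 1 :=
  ⟨continuous_const, fun x y _ _ => by simp [vdm]⟩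

section Symmetry

variable {u : ℝ → ℝ → ℝ} {n : ℕ} {N : (Fin n → ℝ) → (Fin n → ℝ) → ℝ}

theorem swap (hN : ExtendsRatio2 n u N) :
    ExtendsRatio2 n (Function.swap u) (Function.swap N) := by
  refine ⟨hN.1.comp continuous_swap, fun x y hx hy => ?_⟩
  rw [Function.swap, hN.2 y x hy hx, mul_comm (vdm y), ← Matrix.det_transpose]
  rfl

theorem continuous_comp (hN : ExtendsRatio2 n u N) {Z : Type*} [TopologicalSpace Z]
    {f g : Z → Fin n → ℝ} (hf : Continuous f) (hg : Continuous g) :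
    Continuous fun z => N (f z) (g z) :=
  hN.1.comp (hf.prodMk hg)

theorem mul_vdm_mul_vdm (hN : ExtendsRatio2 n u N) {x y : Fin n → ℝ}
    (hx : Function.Injective x) (hy : Function.Injective y) :
    N x y * (vdm x * vdm y) = (kernelMatrix u x y).det := by
  rw [hN.2 x y hx hy, div_mul_cancel₀ _ (mul_ne_zero (vdm_ne_zero hx) (vdm_ne_zero hy)),
    kernelMatrix]

theorem comp_perm_left (hN : ExtendsRatio2 n u N) (σ : Equiv.Perm (Fin n))
    (x y : Fin n → ℝ) : N (x ∘ σ) y = N x y := by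
  refine congrFun (eq_of_eq_on_injective (f := fun p => N (p.1 ∘ σ) p.2)
    (g := fun p => N p.1 p.2) (hN.continuous_comp (by fun_prop) (by fun_prop)) hN.1
    fun x y hx hy => ?_) (x, y)
  have hxσ := hx.comp σ.injective
  have hdet : (kernelMatrix u (x ∘ σ) y).det =
      (Equiv.Perm.sign σ : ℤ) * (kernelMatrix u x y).det :=
    Matrix.det_permute σ (kernelMatrix u x y)
  apply mul_right_cancel₀ (mul_ne_zero (vdm_ne_zero hxσ) (vdm_ne_zero hy))
  rw [hN.mul_vdm_mul_vdm hxσ hy, hdet, ← hN.mul_vdm_mul_vdm hx hy, vdm_comp_perm]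
  ring

theorem comp_perm_right (hN : ExtendsRatio2 n u N) (σ : Equiv.Perm (Fin n))
    (x y : Fin n → ℝ) : N x (y ∘ σ) = N x y :=
  hN.swap.comp_perm_left σ y x

end Symmetry

section Toda

variable {u : ℝ → ℝ → ℝ} {m : ℕ} {L : (Fin m → ℝ) → (Fin m → ℝ) → ℝ}
  {N : (Fin (m + 1) → ℝ) → (Fin (m + 1) → ℝ) → ℝ}
  {U : (Fin (m + 2) → ℝ) → (Fin (m + 2) → ℝ) → ℝ}

theorem desnanot_jacobi_of_injective (hL : ExtendsRatio2 m u L) (hN : ExtendsRatio2 (m + 1) u N)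
    (hU : ExtendsRatio2 (m + 2) u U) {x y : Fin (m + 2) → ℝ} (hx : Function.Injective x)
    (hy : Function.Injective y) :
    (x 0 - x 1) * (y 0 - y 1) *
        (U x y * L (x ∘ Fin.succ ∘ Fin.succ) (y ∘ Fin.succ ∘ Fin.succ)) =
      N (x ∘ Fin.succAbove 1) (y ∘ Fin.succAbove 1) * N (x ∘ Fin.succ) (y ∘ Fin.succ) -
        N (x ∘ Fin.succAbove 1) (y ∘ Fin.succ) * N (x ∘ Fin.succ) (y ∘ Fin.succAbove 1) := by
  have hsucc (k : ℕ) := Fin.succ_injective k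
  have hx₀ := hx.comp (hsucc _)
  have hy₀ := hy.comp (hsucc _)
  have hx₁ := hx.comp (Fin.succAbove_right_injective (p := 1))
  have hy₁ := hy.comp (Fin.succAbove_right_injective (p := 1))
  have hx₂ := hx.comp ((hsucc _).comp (hsucc m))
  have hy₂ := hy.comp ((hsucc _).comp (hsucc m))
  have hdet := _root_.desnanot_jacobi (kernelMatrix u x y)
  simp only [kernelMatrix_submatrix] at hdet
  rw [← hU.mul_vdm_mul_vdm hx hy, ← hL.mul_vdm_mul_vdm hx₂ hy₂, ← hN.mul_vdm_mul_vdm hx₁ hy₁,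
    ← hN.mul_vdm_mul_vdm hx₀ hy₀, ← hN.mul_vdm_mul_vdm hx₁ hy₀,
    ← hN.mul_vdm_mul_vdm hx₀ hy₁] at hdet
  have hvx := vdm_mul_vdm_tail_tail x
  have hvy := vdm_mul_vdm_tail_tail y
  have hne : vdm (x ∘ Fin.succAbove 1) * vdm (x ∘ Fin.succ) *
      (vdm (y ∘ Fin.succAbove 1) * vdm (y ∘ Fin.succ)) ≠ 0 :=
    mul_ne_zero (mul_ne_zero (vdm_ne_zero hx₁) (vdm_ne_zero hx₀))
      (mul_ne_zero (vdm_ne_zero hy₁) (vdm_ne_zero hy₀))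
  apply mul_right_cancel₀ hne
  generalize U x y = Uxy at *
  generalize L _ _ = Lxy at *
  linear_combination hdet - Uxy * Lxy * vdm y * vdm (y ∘ Fin.succ ∘ Fin.succ) * hvx -
    Uxy * Lxy * (x 0 - x 1) * vdm (x ∘ Fin.succAbove 1) * vdm (x ∘ Fin.succ) * hvy

theorem desnanot_jacobi (hL : ExtendsRatio2 m u L) (hN : ExtendsRatio2 (m + 1) u N)
    (hU : ExtendsRatio2 (m + 2) u U) (x y : Fin (m + 2) → ℝ) :
    (x 0 - x 1) * (y 0 - y 1) *
        (U x y * L (x ∘ Fin.succ ∘ Fin.succ) (y ∘ Fin.succ ∘ Fin.succ)) =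
      N (x ∘ Fin.succAbove 1) (y ∘ Fin.succAbove 1) * N (x ∘ Fin.succ) (y ∘ Fin.succ) -
        N (x ∘ Fin.succAbove 1) (y ∘ Fin.succ) * N (x ∘ Fin.succ) (y ∘ Fin.succAbove 1) := by
  refine congrFun (eq_of_eq_on_injective
    (f := fun p : (Fin (m + 2) → ℝ) × (Fin (m + 2) → ℝ) => (p.1 0 - p.1 1) * (p.2 0 - p.2 1) *
      (U p.1 p.2 * L (p.1 ∘ Fin.succ ∘ Fin.succ) (p.2 ∘ Fin.succ ∘ Fin.succ)))
    (g := fun p => N (p.1 ∘ Fin.succAbove 1) (p.2 ∘ Fin.succAbove 1) *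
        N (p.1 ∘ Fin.succ) (p.2 ∘ Fin.succ) -
      N (p.1 ∘ Fin.succAbove 1) (p.2 ∘ Fin.succ) *
        N (p.1 ∘ Fin.succ) (p.2 ∘ Fin.succAbove 1)) ?_ ?_
    fun x y hx hy => hL.desnanot_jacobi_of_injective hN hU hx hy) (x, y)
  · exact (by fun_prop : Continuous _).mul
      (hU.1.mul (hL.continuous_comp (by fun_prop) (by fun_prop)))
  · refine .sub (.mul ?_ ?_) (.mul ?_ ?_) <;>
      exact hN.continuous_comp (by fun_prop) (by fun_prop)

theorem cons_desnanot_jacobi (hL : ExtendsRatio2 m u L) (hN : ExtendsRatio2 (m + 1) u N)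
    (hU : ExtendsRatio2 (m + 2) u U) (p q r t : ℝ) (X Y : Fin m → ℝ) :
    (p - q) * (r - t) *
        (U (Fin.cons p (Fin.cons q X : Fin (m + 1) → ℝ))
          (Fin.cons r (Fin.cons t Y : Fin (m + 1) → ℝ)) * L X Y) =
      N (Fin.cons p X) (Fin.cons r Y) * N (Fin.cons q X) (Fin.cons t Y) -
        N (Fin.cons p X) (Fin.cons t Y) * N (Fin.cons q X) (Fin.cons r Y) := by
  have hdel (p q : ℝ) (X : Fin m → ℝ) :
      (Fin.cons p (Fin.cons q X : Fin (m + 1) → ℝ) : Fin (m + 2) → ℝ) ∘ Fin.succAbove 1 =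
        Fin.cons p X := by
    ext i
    refine Fin.cases ?_ (fun i => ?_) i <;> simp
  have htail {k : ℕ} (p : ℝ) (X : Fin k → ℝ) :
      (Fin.cons p X : Fin (k + 1) → ℝ) ∘ Fin.succ = X := rfl
  simpa only [hdel, ← Function.comp_assoc, htail, Fin.cons_zero, Fin.cons_one] using
    hL.desnanot_jacobi hN hU (Fin.cons p (Fin.cons q X : Fin (m + 1) → ℝ))
      (Fin.cons r (Fin.cons t Y : Fin (m + 1) → ℝ))

end Toda

end ExtendsRatio2

theorem cons_const {α : Type*} {m : ℕ} (x : α) :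
    (Fin.cons x (fun _ => x) : Fin (m + 1) → α) = fun _ => x := by
  ext i
  refine Fin.cases ?_ (fun i => ?_) i <;> simp

/-- The quotient of the kernels `U`, `L` and `N` of sizes `m + 2`, `m` and `m + 1` that becomes, on
the diagonal `p = q`, `X = (p, …, p)`, the Toda density `U L / N²`. For `p ≠ q` it measures the
dependence on `y` of the ratio of `N` at the points `(p, X)` and `(q, X)`. -/
noncomputable def todaDensity {m : ℕ} (L : (Fin m → ℝ) → (Fin m → ℝ) → ℝ)
    (N : (Fin (m + 1) → ℝ) → (Fin (m + 1) → ℝ) → ℝ)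
    (U : (Fin (m + 2) → ℝ) → (Fin (m + 2) → ℝ) → ℝ) (p q : ℝ) (X : Fin m → ℝ) (y : ℝ) : ℝ :=
  U (Fin.cons p (Fin.cons q X : Fin (m + 1) → ℝ)) (fun _ => y) * L X (fun _ => y) /
    (N (Fin.cons p X) (fun _ => y) * N (Fin.cons q X) (fun _ => y))

section Toda

variable {u : ℝ → ℝ → ℝ} {m : ℕ} {L : (Fin m → ℝ) → (Fin m → ℝ) → ℝ}
  {N : (Fin (m + 1) → ℝ) → (Fin (m + 1) → ℝ) → ℝ}
  {U : (Fin (m + 2) → ℝ) → (Fin (m + 2) → ℝ) → ℝ}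

theorem continuous_todaDensity (hL : ExtendsRatio2 m u L) (hN : ExtendsRatio2 (m + 1) u N)
    (hU : ExtendsRatio2 (m + 2) u U) (hN₀ : ∀ x y, N x y ≠ 0) :
    Continuous fun z : (ℝ × ℝ × (Fin m → ℝ)) × ℝ =>
      todaDensity L N U z.1.1 z.1.2.1 z.1.2.2 z.2 := by
  refine .div (.mul ?_ ?_) (.mul ?_ ?_) fun z => mul_ne_zero (hN₀ _ _) (hN₀ _ _)
  · exact hU.continuous_comp (.finCons (by fun_prop) (.finCons (by fun_prop) (by fun_prop)))
      (by fun_prop)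
  · exact hL.continuous_comp (by fun_prop) (by fun_prop)
  all_goals exact hN.continuous_comp (.finCons (by fun_prop) (by fun_prop)) (by fun_prop)

theorem hasDerivAt_cons_div_cons (hL : ExtendsRatio2 m u L)
    (hN : ExtendsRatio2 (m + 1) u N) (hU : ExtendsRatio2 (m + 2) u U) (hN₀ : ∀ x y, N x y ≠ 0)
    (p q : ℝ) (X : Fin m → ℝ) (y : ℝ) :
    HasDerivAt (fun y => N (Fin.cons p X) (fun _ => y) / N (Fin.cons q X) (fun _ => y))
      ((m + 1) * ((p - q) *
        (U (Fin.cons p (Fin.cons q X : Fin (m + 1) → ℝ)) (fun _ => y) * L X (fun _ => y) /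
          N (Fin.cons q X) (fun _ => y) ^ 2))) y := by
  let K (r t : ℝ) (Y : Fin m → ℝ) : ℝ := (p - q) *
    (U (Fin.cons p (Fin.cons q X : Fin (m + 1) → ℝ))
        (Fin.cons r (Fin.cons t Y : Fin (m + 1) → ℝ)) * L X Y /
      (N (Fin.cons q X) (Fin.cons r Y) * N (Fin.cons q X) (Fin.cons t Y)))
  have hK : Continuous fun z : ℝ × ℝ × (Fin m → ℝ) => K z.1 z.2.1 z.2.2 := by
    refine continuous_const.mul
      (.div (.mul ?_ ?_) (.mul ?_ ?_) fun z => mul_ne_zero (hN₀ _ _) (hN₀ _ _))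
    · exact hU.continuous_comp (by fun_prop)
        (.finCons (by fun_prop) (.finCons (by fun_prop) (by fun_prop)))
    · exact hL.continuous_comp (by fun_prop) (by fun_prop)
    all_goals exact hN.continuous_comp (by fun_prop) (.finCons (by fun_prop) (by fun_prop))
  have hdiff (r t : ℝ) (Y : Fin m → ℝ) :
      N (Fin.cons p X) (Fin.cons r Y) / N (Fin.cons q X) (Fin.cons r Y) -
        N (Fin.cons p X) (Fin.cons t Y) / N (Fin.cons q X) (Fin.cons t Y) =
      (r - t) • K r t Y := by
    have hDJ := hL.cons_desnanot_jacobi hN hU p q r t X Y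
    rw [div_sub_div _ _ (hN₀ _ _) (hN₀ _ _), smul_eq_mul, ← mul_assoc, ← mul_div_assoc]
    congr 1
    linear_combination -hDJ
  have hderiv := hasDerivAt_comp_diagonal
    (F := fun Y => N (Fin.cons p X) Y / N (Fin.cons q X) Y)
    (fun σ Y => by simp only [hN.comp_perm_right]) hK hdiff y
  simpa only [K, cons_const, smul_eq_mul, ← sq] using hderiv

theorem hasDerivAt_log_cons_sub_log_cons (hL : ExtendsRatio2 m u L) (hN : ExtendsRatio2 (m + 1) u N)
    (hU : ExtendsRatio2 (m + 2) u U) (hN₀ : ∀ x y, N x y ≠ 0) (p q : ℝ) (X : Fin m → ℝ) (y : ℝ) :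
    HasDerivAt
      (fun y => Real.log (N (Fin.cons p X) fun _ => y) - Real.log (N (Fin.cons q X) fun _ => y))
      ((p - q) * ((m + 1) * todaDensity L N U p q X y)) y := by
  have hp := hN₀ (Fin.cons p X) fun _ => y
  have hq := hN₀ (Fin.cons q X) fun _ => y
  simp only [← Real.log_div (hN₀ _ _) (hN₀ _ _)]
  convert (hasDerivAt_cons_div_cons hL hN hU hN₀ p q X y).log (div_ne_zero hp hq) using 1
  rw [todaDensity]
  field_simp

theorem mixed_log_difference_eq_integral (hL : ExtendsRatio2 m u L)
    (hN : ExtendsRatio2 (m + 1) u N) (hU : ExtendsRatio2 (m + 2) u U) (hN₀ : ∀ x y, N x y ≠ 0)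
    (a b c d : ℝ) :
    (Real.log (N (fun _ => b) fun _ => d) - Real.log (N (fun _ => b) fun _ => c)) -
        (Real.log (N (fun _ => a) fun _ => d) - Real.log (N (fun _ => a) fun _ => c)) =
      ∫ x in a..b, (m + 1) * ∫ y in c..d, (m + 1) * todaDensity L N U x x (fun _ => x) y := by
  have hcont := continuous_todaDensity hL hN hU hN₀
  let K (p q : ℝ) (X : Fin m → ℝ) : ℝ := ∫ y in c..d, (m + 1) * todaDensity L N U p q X y
  have hK : Continuous fun z : ℝ × ℝ × (Fin m → ℝ) => K z.1 z.2.1 z.2.2 :=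
    intervalIntegral.continuous_parametric_intervalIntegral_of_continuous'
      (f := fun (z : ℝ × ℝ × (Fin m → ℝ)) y => (m + 1) * todaDensity L N U z.1 z.2.1 z.2.2 y)
      (hcont.const_mul (m + 1 : ℝ)) c d
  have hdiff (p q : ℝ) (X : Fin m → ℝ) :
      (Real.log (N (Fin.cons p X) fun _ => d) - Real.log (N (Fin.cons p X) fun _ => c)) -
        (Real.log (N (Fin.cons q X) fun _ => d) - Real.log (N (Fin.cons q X) fun _ => c)) =
      (p - q) • K p q X := by
    have hpt : Continuous fun y : ℝ => ((p, q, X), y) := by fun_prop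
    have hcont_y : Continuous fun y => (p - q) * ((m + 1) * todaDensity L N U p q X y) :=
      ((hcont.comp hpt).const_mul _).const_mul _
    rw [smul_eq_mul, ← intervalIntegral.integral_const_mul,
      intervalIntegral.integral_eq_sub_of_hasDerivAt
        (fun y _ => hasDerivAt_log_cons_sub_log_cons hL hN hU hN₀ p q X y)
        (hcont_y.intervalIntegrable c d)]
    ring
  have hderiv := hasDerivAt_comp_diagonal
    (F := fun X => Real.log (N X fun _ => d) - Real.log (N X fun _ => c))
    (fun σ X => by simp only [hN.comp_perm_left]) hK hdiff
  have hdiag : Continuous fun x : ℝ => (x, x, fun _ : Fin m => x) := by fun_prop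
  have hcont_x : Continuous fun x => ((m + 1 : ℝ) • K x x fun _ => x) :=
    (hK.comp hdiag).const_smul (m + 1 : ℝ)
  exact (intervalIntegral.integral_eq_sub_of_hasDerivAt (fun x _ => hderiv x)
    (hcont_x.intervalIntegrable a b)).symm

theorem log_cross_ratio_eq_integral (hL : ExtendsRatio2 m u L) (hN : ExtendsRatio2 (m + 1) u N)
    (hU : ExtendsRatio2 (m + 2) u U) (hN₀ : ∀ x y, N x y ≠ 0) (a b c d : ℝ) :
    Real.log (N (fun _ => a) (fun _ => c) * N (fun _ => b) (fun _ => d) /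
        (N (fun _ => a) (fun _ => d) * N (fun _ => b) (fun _ => c))) =
      ∫ x in a..b, ∫ y in c..d, (m + 1) ^ 2 * (L (fun _ => x) (fun _ => y) *
        U (fun _ => x) (fun _ => y) / N (fun _ => x) (fun _ => y) ^ 2) := by
  rw [Real.log_div (mul_ne_zero (hN₀ _ _) (hN₀ _ _)) (mul_ne_zero (hN₀ _ _) (hN₀ _ _)),
    Real.log_mul (hN₀ _ _) (hN₀ _ _), Real.log_mul (hN₀ _ _) (hN₀ _ _)]
  have hint := mixed_log_difference_eq_integral hL hN hU hN₀ a b c d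
  simp only [todaDensity, cons_const, ← intervalIntegral.integral_const_mul] at hint
  calc
    _ = _ := by ring
    _ = _ := hint
    _ = _ := by
      congr! 4
      ring

end Toda

theorem cInv_ne_zero (n : ℕ) : cInv n ≠ 0 :=
  Finset.prod_ne_zero_iff.2 fun i _ => Nat.cast_ne_zero.2 i.factorial_ne_zero

theorem cInv_mul_cInv_add_two_div (n : ℕ) :
    cInv n * cInv (n + 2) / cInv (n + 1) ^ 2 = n + 1 := by
  rw [div_eq_iff (pow_ne_zero 2 (cInv_ne_zero _))]
  simp only [cInv, Finset.prod_range_succ, Nat.factorial_succ]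
  push_cast
  ring

theorem toda_integrated_general (u : ℝ → ℝ → ℝ)
    (M : (n : ℕ) → (Fin n → ℝ) → (Fin n → ℝ) → ℝ) {n : ℕ} (hn : 1 ≤ n)
    (hM : ∀ k, 1 ≤ k → k ≤ n + 1 → ExtendsRatio2 k u (M k)) (hMn : ∀ x y, M n x y ≠ 0)
    (τ : ℕ → ℝ → ℝ → ℝ)
    (hτ0 : ∀ a b : ℝ, τ 0 a b = 1)
    (hτ : ∀ k, 1 ≤ k → ∀ a b : ℝ, τ k a b = (cInv k) ^ 2 * M k (fun _ => a) (fun _ => b))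
    (a b c d : ℝ) :
    Real.log (τ n a c * τ n b d / (τ n a d * τ n b c)) =
      ∫ x in a..b, ∫ y in c..d, τ (n - 1) x y * τ (n + 1) x y / (τ n x y) ^ 2 := by
  obtain ⟨m, rfl⟩ := Nat.exists_eq_add_of_le' hn
  obtain ⟨L, hL, hτL⟩ : ∃ L, ExtendsRatio2 m u L ∧
      ∀ x y, τ m x y = cInv m ^ 2 * L (fun _ => x) (fun _ => y) := by
    rcases Nat.eq_zero_or_pos m with rfl | hm
    · exact ⟨_, .zero, fun x y => by simp [hτ0, cInv]⟩
    · exact ⟨M m, hM m hm (by lia), hτ m hm⟩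
  have hcross : τ (m + 1) a c * τ (m + 1) b d / (τ (m + 1) a d * τ (m + 1) b c) =
      M (m + 1) (fun _ => a) (fun _ => c) * M (m + 1) (fun _ => b) (fun _ => d) /
        (M (m + 1) (fun _ => a) (fun _ => d) * M (m + 1) (fun _ => b) (fun _ => c)) := by
    have hc := cInv_ne_zero (m + 1)
    simp only [hτ _ hn]
    field_simp
  rw [hcross, log_cross_ratio_eq_integral hL (hM (m + 1) hn (by lia)) (hM (m + 2) (by lia) le_rfl)
    hMn]
  congr! 4 with x y
  rw [← cInv_mul_cInv_add_two_div, Nat.add_sub_cancel, hτL, hτ _ hn, hτ _ (by lia)]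
  ring

/-- Proposition 3.2: the generalized bi-directional Wronskians `τ_n` built from a
continuous kernel `u` satisfy the two-dimensional Toda equations in integrated form. -/
theorem toda_integrated (u : ℝ → ℝ → ℝ)
    (hu : Continuous fun p : ℝ × ℝ => u p.1 p.2)
    (M : (n : ℕ) → (Fin n → ℝ) → (Fin n → ℝ) → ℝ)
    (hM : ∀ n, 1 ≤ n → ExtendsRatio2 n u (M n))
    (hMpos : ∀ n, 1 ≤ n → ∀ x y, 0 < M n x y)
    (τ : ℕ → ℝ → ℝ → ℝ)
    (hτ0 : ∀ a b : ℝ, τ 0 a b = 1)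
    (hτ : ∀ n, 1 ≤ n → ∀ a b : ℝ,
      τ n a b = (cInv n) ^ 2 * M n (fun _ => a) (fun _ => b)) :
    ∀ n, 1 ≤ n → ∀ a b c d : ℝ,
      Real.log (τ n a c * τ n b d / (τ n a d * τ n b c)) =
        ∫ x in a..b, ∫ y in c..d,
          τ (n - 1) x y * τ (n + 1) x y / (τ n x y) ^ 2 :=
  fun _ hn => toda_integrated_general u M hn (fun k hk _ => hM k hk)
    (fun x y => (hMpos _ hn x y).ne') τ hτ0 hτ
end

section
/- Suppose f_1,…,f_n : ℝ → ℝ are continuous and linearly independent functions such that f_1∧⋯∧f_n/Δ_n, defined on points with pairwise distinct coordinates, extends continuously to ℝ^n. Then for any subset {i_1 < i_2 < ⋯ < i_k} ⊆ {1,2,…,n}, the function f_{i_1}∧⋯∧f_{i_k}/Δ_k, defined on points of ℝ^k with pairwise distinct coordinates, extends continuously to ℝ^k. -/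
open Finset

/-- f_1 ∧ ⋯ ∧ f_n (x) = det [f_i(x_j)]. -/
noncomputable def wedge {n : ℕ} (f : Fin n → ℝ → ℝ) (x : Fin n → ℝ) : ℝ :=
  Matrix.det (Matrix.of fun i j => f i (x j))

/-- `F` is a continuous extension to ℝ^n of the ratio (f_1∧⋯∧f_n)/Δ_n, which is
defined on points with pairwise distinct coordinates. -/
def ExtendsRatio {n : ℕ} (f : Fin n → ℝ → ℝ) (F : (Fin n → ℝ) → ℝ) : Prop :=
  Continuous F ∧ ∀ x : Fin n → ℝ, Function.Injective x → F x = wedge f x / vdm x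

/-!
Fix `x`. The determinant with first row `w` and remaining rows `(f_i(x_j))_i` is linear in `w`.
At `w = (f_i(y))_i` it equals `f_1∧⋯∧f_n (y, x)`, a continuous function of `x` times
`Δ_n(y, x) = ∏ i, (y - x_i) * Δ_{n-1}(x)`. As the `f_i` are linearly independent, the vectors
`(f_i(y))_i` span the space of all `w`, so for every `w` the determinant is a continuous multiple
of `Δ_{n-1}(x)`; the first basis vector yields `f_2∧⋯∧f_n`. Functions are thus removed one at a
time.
-/

section CommRing

variable {R X : Type*} [CommRing R] {n : ℕ}

/-- The Vandermonde product `Δ_n` over a commutative ring, with the sign convention of `vdm`, which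
is opposite to that of `Matrix.det_vandermonde`. -/
def vandermondeProd (x : Fin n → R) : R :=
  ∏ i, ∏ j ∈ Finset.Ioi i, (x i - x j)

/-- The alternant `f_1∧⋯∧f_n` of functions on an arbitrary type with values in a commutative
ring. -/
def alternant (f : Fin n → X → R) (x : Fin n → X) : R :=
  Matrix.det (Matrix.of fun i j => f i (x j))

/-- The alternant of `n + 1` functions with the column of values at its first point replaced by an
arbitrary vector `w`, as a linear map in `w`. The matrix is transposed so that `w` is a row. -/
def borderedAlternant (f : Fin (n + 1) → X → R) :
    (Fin (n + 1) → R) →ₗ[R] (Fin n → X) → R where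
  toFun w x := Matrix.detRowAlternating (Matrix.vecCons w fun j i => f i (x j))
  map_add' _ _ := funext fun _ => AlternatingMap.map_vecCons_add _ _ _ _
  map_smul' _ _ := funext fun _ => AlternatingMap.map_vecCons_smul _ _ _ _

theorem vandermondeProd_cons (y : R) (x : Fin n → R) :
    vandermondeProd (Fin.cons y x : Fin (n + 1) → R) = (∏ i, (y - x i)) * vandermondeProd x := by
  simp [vandermondeProd, Fin.prod_univ_succ, Fin.prod_Ioi_succ]

theorem vandermondeProd_eq_zero_iff [IsDomain R] {x : Fin n → R} :
    vandermondeProd x = 0 ↔ ¬ Function.Injective x := by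
  simp only [vandermondeProd, Finset.prod_eq_zero_iff, sub_eq_zero, Finset.mem_univ,
    Finset.mem_Ioi, true_and]
  refine ⟨fun ⟨i, j, hij, hx⟩ hinj => hij.ne (hinj hx), fun hx => ?_⟩
  obtain ⟨i, j, hxij, hij⟩ := Function.not_injective_iff.mp hx
  exact hij.lt_or_gt.elim (fun h => ⟨i, j, h, hxij⟩) fun h => ⟨j, i, h, hxij.symm⟩

theorem alternant_eq_zero_of_not_injective (f : Fin n → X → R) {x : Fin n → X}
    (hx : ¬ Function.Injective x) : alternant f x = 0 := by
  obtain ⟨i, j, hxij, hij⟩ := Function.not_injective_iff.mp hx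
  exact Matrix.det_zero_of_column_eq hij fun k => by simp [hxij]

theorem alternant_comp_perm (f : Fin n → X → R) (σ : Equiv.Perm (Fin n)) :
    alternant (f ∘ σ) = (Equiv.Perm.sign σ : R) • alternant f :=
  funext fun x => Matrix.det_permute σ (Matrix.of fun i j => f i (x j))

theorem borderedAlternant_flip (f : Fin (n + 1) → X → R) (y : X) (x : Fin n → X) :
    borderedAlternant f (flip f y) x = alternant f (Fin.cons y x) := by
  rw [alternant, ← Matrix.det_transpose]
  refine congrArg Matrix.det (Matrix.ext fun j i => ?_)
  cases j using Fin.cases <;> rfl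

theorem borderedAlternant_single_zero (f : Fin (n + 1) → X → R) :
    borderedAlternant f (Pi.single 0 1) = alternant (Fin.tail f) := by
  funext x
  have h_expand : borderedAlternant f (Pi.single 0 1) x =
      (Matrix.of fun j i => Fin.tail f i (x j)).det := by
    refine (Matrix.det_succ_row_zero _).trans
      ((Fintype.sum_eq_single 0 fun j hj => ?_).trans ?_)
    · simp [hj]
    · simp only [Fin.val_zero, pow_zero, one_mul, Matrix.cons_val_zero, Pi.single_eq_same,
        Fin.succAbove_zero]
      rfl
  exact h_expand.trans (Matrix.det_transpose _)

section ContinuousMultiples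

variable [TopologicalSpace R] [IsTopologicalRing R]

variable (R n) in
/-- The functions on `R^n` that are a continuous function times `Δ_n`. Over a field, an alternant
belongs to this submodule exactly when its ratio by `Δ_n` extends continuously. -/
def vandermondeMultiples : Submodule R ((Fin n → R) → R) :=
  LinearMap.range <|
    LinearMap.mulRight R vandermondeProd ∘ₗ ContinuousMap.coeFnLinearMap R (α := Fin n → R) (M := R)

theorem mem_vandermondeMultiples {h : (Fin n → R) → R} :
    h ∈ vandermondeMultiples R n ↔
      ∃ G : (Fin n → R) → R, Continuous G ∧ ∀ x, h x = G x * vandermondeProd x :=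
  ⟨fun ⟨G, hG⟩ => ⟨G, G.continuous, fun x => (congrFun hG x).symm⟩,
    fun ⟨G, hG, h_eq⟩ => ⟨⟨G, hG⟩, funext fun x => (h_eq x).symm⟩⟩

theorem comp_cons_mem_vandermondeMultiples {h : (Fin (n + 1) → R) → R}
    (hh : h ∈ vandermondeMultiples R (n + 1)) (y : R) :
    (fun x => h (Fin.cons y x)) ∈ vandermondeMultiples R n := by
  obtain ⟨G, hG, h_eq⟩ := mem_vandermondeMultiples.mp hh
  have h_cons : Continuous fun x : Fin n → R => (Fin.cons y x : Fin (n + 1) → R) :=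
    continuous_const.finCons continuous_id
  refine mem_vandermondeMultiples.mpr
    ⟨fun x => G (Fin.cons y x) * ∏ i, (y - x i), (hG.comp h_cons).mul (by fun_prop), fun x => ?_⟩
  rw [h_eq, vandermondeProd_cons, mul_assoc]

theorem alternant_tail_mem_vandermondeMultiples {f : Fin (n + 1) → R → R}
    (hspan : Submodule.span R (Set.range (flip f)) = ⊤)
    (hf : alternant f ∈ vandermondeMultiples R (n + 1)) :
    alternant (Fin.tail f) ∈ vandermondeMultiples R n := by
  have h_bordered : ⊤ ≤ (vandermondeMultiples R n).comap (borderedAlternant f) := by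
    rw [← hspan, Submodule.span_le]
    rintro _ ⟨y, rfl⟩
    have h_flip : borderedAlternant f (flip f y) = fun x => alternant f (Fin.cons y x) :=
      funext (borderedAlternant_flip f y)
    simpa only [SetLike.mem_coe, Submodule.mem_comap, h_flip] using
      comp_cons_mem_vandermondeMultiples hf y
  exact borderedAlternant_single_zero f ▸ h_bordered (Submodule.mem_top (x := Pi.single 0 1))

end ContinuousMultiples

end CommRing

section Field

variable {K : Type*} [Field K] [TopologicalSpace K] {n : ℕ}

/-- `F` is a continuous extension to `K^n` of the ratio `(f_1∧⋯∧f_n)/Δ_n`; for `K = ℝ` this is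
`ExtendsRatio`. -/
def ExtendsAlternantRatio (f : Fin n → K → K) (F : (Fin n → K) → K) : Prop :=
  Continuous F ∧ ∀ x, Function.Injective x → F x = alternant f x / vandermondeProd x

theorem extendsAlternantRatio_iff {f : Fin n → K → K} {F : (Fin n → K) → K} :
    ExtendsAlternantRatio f F ↔
      Continuous F ∧ ∀ x, alternant f x = F x * vandermondeProd x := by
  refine and_congr_right fun _ => forall_congr' fun x => ?_
  by_cases hx : Function.Injective x
  · have h_ne : vandermondeProd x ≠ 0 := fun h => vandermondeProd_eq_zero_iff.mp h hx
    rw [eq_div_iff h_ne, eq_comm, imp_iff_right hx]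
  · simp [hx, alternant_eq_zero_of_not_injective f hx, vandermondeProd_eq_zero_iff.mpr hx]

variable [IsTopologicalRing K]

theorem exists_extendsAlternantRatio_iff {f : Fin n → K → K} :
    (∃ F, ExtendsAlternantRatio f F) ↔ alternant f ∈ vandermondeMultiples K n := by
  simp only [extendsAlternantRatio_iff, mem_vandermondeMultiples]

theorem alternant_comp_mem_vandermondeMultiples {k : ℕ} {f : Fin n → K → K}
    (hli : LinearIndependent K f) (hf : alternant f ∈ vandermondeMultiples K n)
    {ι : Fin k → Fin n} (hι : Function.Injective ι) :
    alternant (f ∘ ι) ∈ vandermondeMultiples K k := by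
  have hkn : k ≤ n := by simpa using Fintype.card_le_of_injective ι hι
  induction hkn using Nat.decreasingInduction with
  | self =>
    let σ : Equiv.Perm (Fin n) := Equiv.ofBijective ι (Finite.injective_iff_bijective.mp hι)
    exact alternant_comp_perm f σ ▸ Submodule.smul_mem _ _ hf
  | of_succ k hk ih =>
    obtain ⟨j, hj⟩ : ∃ j, j ∉ Set.range ι := by
      by_contra! h_surj
      exact hk.not_ge (by simpa using Fintype.card_le_of_surjective ι h_surj)
    have h_cons : Function.Injective (Fin.cons j ι : Fin (k + 1) → Fin n) :=
      Fin.cons_injective_iff.mpr ⟨hj, hι⟩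
    exact alternant_tail_mem_vandermondeMultiples
      (span_flip_eq_top_iff_linearIndependent.mpr (hli.comp _ h_cons)) (ih h_cons)

theorem minors_extend_general {k : ℕ} {f : Fin n → K → K} (hli : LinearIndependent K f)
    {F : (Fin n → K) → K} (hF : ExtendsAlternantRatio f F)
    {ι : Fin k → Fin n} (hι : Function.Injective ι) :
    ∃ Fk : (Fin k → K) → K, ExtendsAlternantRatio (f ∘ ι) Fk :=
  exists_extendsAlternantRatio_iff.mpr <|
    alternant_comp_mem_vandermondeMultiples hli (exists_extendsAlternantRatio_iff.mp ⟨F, hF⟩) hι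

end Field

/-- Lemma 4.1: if `f_1,…,f_n` are continuous, linearly independent and
(f_1∧⋯∧f_n)/Δ_n extends continuously to ℝ^n, then for any subset
{i_1 < ⋯ < i_k} ⊆ {1,…,n} the ratio (f_{i_1}∧⋯∧f_{i_k})/Δ_k extends
continuously to ℝ^k. -/
theorem minors_extend (n : ℕ) (f : Fin n → ℝ → ℝ)
    (hf : ∀ i, Continuous (f i))
    (hli : LinearIndependent ℝ f)
    (F : (Fin n → ℝ) → ℝ) (hF : ExtendsRatio f F) :
    ∀ (k : ℕ) (ι : Fin k → Fin n), StrictMono ι →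
      ∃ Fk : (Fin k → ℝ) → ℝ, ExtendsRatio (f ∘ ι) Fk :=
  fun _ _ hι => minors_extend_general hli hF hι.injective
end

section
/- Suppose ρ_1, ρ_2,…,ρ_n : ℝ → ℝ are continuous functions, and define g_1 = ρ_1, g_2 = ρ_1 ∫ ρ_2, …, g_n = ρ_1 ∫ ρ_2 ∫ ⋯ ∫ ρ_n (iterated indefinite integrals with a fixed choice of antiderivatives), and likewise h_1 = ρ_2, h_2 = ρ_2 ∫ ρ_3, …, h_{n−1} = ρ_2 ∫ ρ_3 ∫ ⋯ ∫ ρ_n (using the same antiderivatives). Then for every x ∈ ℝ^n with x_1 ≤ x_2 ≤ ⋯ ≤ x_n, g_1∧⋯∧g_n(x) = ( ∏_{k=1}^n g_1(x_k) ) · ∫_{y ⪯ x} h_1∧⋯∧h_{n−1}(y) dy, where the integral is over the set of y ∈ ℝ^{n−1} interlacing with x. -/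
open Finset MeasureTheory

/-! Factoring `g_1 (x_j)` out of the `j`-th column of the matrix of `g_1 ∧ ⋯ ∧ g_n (x)` leaves a row
of ones above the rows `Q_i (x_j)`, where `Q_i` is the chosen antiderivative of `h_i`. Subtracting
from each column its predecessor turns this into the determinant of the increments
`Q_i (x_{j+1}) - Q_i (x_j) = ∫ t in x_j..x_{j+1}, h_i t`. Since the set of interlacing points is a
product of intervals and the `j`-th column of the matrix of `h_1 ∧ ⋯ ∧ h_{n-1} (y)` depends only on
`y_j`, Fubini's theorem identifies that determinant with the integral of `h_1 ∧ ⋯ ∧ h_{n-1}`. -/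

theorem integral_det_pi {ι 𝕜 : Type*} [Fintype ι] [DecidableEq ι] [RCLike 𝕜]
    {E : ι → Type*} [∀ j, MeasurableSpace (E j)] (μ : ∀ j, Measure (E j)) [∀ j, SigmaFinite (μ j)]
    {f : ι → ∀ j, E j → 𝕜} (hf : ∀ i j, Integrable (f i j) (μ j)) :
    ∫ y, Matrix.det (Matrix.of fun i j => f i j (y j)) ∂Measure.pi μ =
      Matrix.det (Matrix.of fun i j => ∫ t, f i j t ∂μ j) := by
  have integrable_prod (σ : Equiv.Perm ι) :
      Integrable (fun y => ∏ j, f (σ j) j (y j)) (Measure.pi μ) :=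
    Integrable.fintype_prod_dep fun j => hf (σ j) j
  simp only [Matrix.det_apply', Matrix.of_apply]
  rw [integral_finsetSum _ fun σ _ => (integrable_prod σ).const_mul _]
  refine Finset.sum_congr rfl fun σ _ => ?_
  rw [integral_const_mul, integral_fintype_prod_eq_prod fun j => f (σ j) j]

theorem det_eq_det_sub_of_row_zero_eq_one {R : Type*} [CommRing R] {m : ℕ}
    {A : Matrix (Fin (m + 1)) (Fin (m + 1)) R} (hA : ∀ j, A 0 j = 1) :
    A.det = Matrix.det (Matrix.of fun i j : Fin m => A i.succ j.succ - A i.succ j.castSucc) := by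
  let B : Matrix (Fin (m + 1)) (Fin (m + 1)) R :=
    Matrix.of fun i => Fin.cons (A i 0) fun j => A i j.succ - A i j.castSucc
  have det_A : A.det = B.det :=
    Matrix.det_eq_of_forall_col_eq_smul_add_pred (fun _ => 1) (by simp [B]) (by simp [B])
  have row_zero : B 0 = Pi.single 0 1 := by
    ext j
    cases j using Fin.cases <;> simp [B, hA]
  have minor : B.submatrix Fin.succ Fin.succ =
      Matrix.of fun i j => A i.succ j.succ - A i.succ j.castSucc := rfl
  rw [det_A, Matrix.det_succ_row_zero, Fin.sum_univ_succ]
  simp [row_zero, minor]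

theorem wedge_mul_left {n : ℕ} (w : ℝ → ℝ) (f : Fin n → ℝ → ℝ) (x : Fin n → ℝ) :
    wedge (fun i t => w t * f i t) x = (∏ k, w (x k)) * wedge f x :=
  Matrix.det_mul_row (fun k => w (x k)) (Matrix.of fun i j => f i (x j))

theorem wedge_cons_one {m : ℕ} (Q : Fin m → ℝ → ℝ) (x : Fin (m + 1) → ℝ) :
    wedge (Fin.cons 1 Q) x =
      Matrix.det (Matrix.of fun i j => Q i (x j.succ) - Q i (x j.castSucc)) :=
  det_eq_det_sub_of_row_zero_eq_one fun _ => rfl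

theorem setIntegral_Icc_wedge {m : ℕ} {h : Fin m → ℝ → ℝ} {a b : Fin m → ℝ} (hab : a ≤ b)
    (hh : ∀ i j, IntervalIntegrable (h i) volume (a j) (b j)) :
    ∫ y in Set.Icc a b, wedge h y =
      Matrix.det (Matrix.of fun i j => ∫ t in a j..b j, h i t) := by
  have integrable_Icc (i j : Fin m) : IntegrableOn (h i) (Set.Icc (a j) (b j)) :=
    (intervalIntegrable_iff_integrableOn_Icc_of_le (hab j)).1 (hh i j)
  have integral_Icc (i j : Fin m) :
      ∫ t in Set.Icc (a j) (b j), h i t = ∫ t in a j..b j, h i t := by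
    rw [integral_Icc_eq_integral_Ioc, intervalIntegral.integral_of_le (hab j)]
  rw [← Set.pi_univ_Icc, volume_pi, Measure.restrict_pi_pi]
  simp only [wedge, integral_det_pi _ integrable_Icc, integral_Icc]

theorem continuous_iteratedIntegral {m : ℕ} {ρ : ℕ → ℝ → ℝ} {T P : ℕ → ℕ → ℝ → ℝ}
    (hT0 : ∀ i, i ≤ m → T i 0 = ρ i)
    (hP : ∀ i k, i + 1 + k ≤ m → ∀ x : ℝ, HasDerivAt (P i k) (T (i + 1) k x) x)
    (hTs : ∀ i k, i + (k + 1) ≤ m → T i (k + 1) = fun x => ρ i x * P i k x)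
    {i k : ℕ} (hρ : Continuous (ρ i)) (hik : i + k ≤ m) : Continuous (T i k) := by
  cases k with
  | zero => rwa [hT0 i hik]
  | succ k =>
    have hPc : Continuous (P i k) :=
      continuous_iff_continuousAt.2 fun t => (hP i k (by omega) t).continuousAt
    rw [hTs i k hik]
    exact hρ.mul hPc

theorem wedge_as_interlacing_integral_general {m : ℕ} {g : Fin (m + 1) → ℝ → ℝ}
    {h Q : Fin m → ℝ → ℝ} (hg : ∀ k t, g k.succ t = g 0 t * Q k t)
    (hh : ∀ k a b, IntervalIntegrable (h k) volume a b)
    (hQ : ∀ k a b, ∫ t in a..b, h k t = Q k b - Q k a)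
    {x : Fin (m + 1) → ℝ} (hx : Monotone x) :
    wedge g x =
      (∏ k, g 0 (x k)) *
        ∫ y in {y : Fin m → ℝ |
            ∀ i : Fin m, x i.castSucc ≤ y i ∧ y i ≤ x i.succ}, wedge h y := by
  have factor : g = fun i t => g 0 t * (Fin.cons 1 Q : Fin (m + 1) → ℝ → ℝ) i t := by
    ext i t
    cases i using Fin.cases <;> simp [hg]
  have interlacing_eq_Icc :
      {y : Fin m → ℝ | ∀ i : Fin m, x i.castSucc ≤ y i ∧ y i ≤ x i.succ} =
        Set.Icc (fun i => x i.castSucc) (fun i => x i.succ) := by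
    ext y
    simp [Pi.le_def, forall_and]
  have increments : wedge (Fin.cons 1 Q) x =
      ∫ y in Set.Icc (fun i => x i.castSucc) (fun i => x i.succ), wedge h y := by
    rw [setIntegral_Icc_wedge (fun i => hx Fin.castSucc_lt_succ.le) fun i _ => hh i _ _]
    simp only [wedge_cons_one, hQ]
  calc
    wedge g x = wedge (fun i t => g 0 t * (Fin.cons 1 Q : Fin (m + 1) → ℝ → ℝ) i t) x :=
      congrArg (wedge · x) factor
    _ = (∏ k, g 0 (x k)) * wedge (Fin.cons 1 Q) x := wedge_mul_left _ _ _
    _ = _ := by rw [increments, interlacing_eq_Icc]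

/-- With `g_k = ρ_1 ∫ ρ_2 ∫ ⋯ ∫ ρ_k` and `h_k = ρ_2 ∫ ρ_3 ∫ ⋯ ∫ ρ_{k+1}` (iterated
indefinite integrals with the same choices of antiderivatives, encoded by the data
`T i k = ρ_{i+1} ∫ ρ_{i+2} ∫ ⋯ ∫ ρ_{i+k+1}` and the antiderivatives `P i k` of
`T (i+1) k`; indices 0-based), for every `x` with `x_1 ≤ x_2 ≤ ⋯ ≤ x_n`,
g_1∧⋯∧g_n (x) = ( ∏_k g_1(x_k) ) · ∫_{y ⪯ x} h_1∧⋯∧h_{n−1}(y) dy,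
the integral being over the `y ∈ ℝ^{n−1}` interlacing with `x`.
Here the number of functions is `n = m + 1`. -/
theorem wedge_as_interlacing_integral (m : ℕ) (ρ : ℕ → ℝ → ℝ)
    (hρ : ∀ i, i ≤ m → Continuous (ρ i))
    (T P : ℕ → ℕ → ℝ → ℝ)
    (hT0 : ∀ i, i ≤ m → T i 0 = ρ i)
    (hP : ∀ i k, i + 1 + k ≤ m → ∀ x : ℝ, HasDerivAt (P i k) (T (i + 1) k x) x)
    (hTs : ∀ i k, i + (k + 1) ≤ m → T i (k + 1) = fun x => ρ i x * P i k x)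
    (g : Fin (m + 1) → ℝ → ℝ) (hg : ∀ k : Fin (m + 1), g k = T 0 (k : ℕ))
    (h : Fin m → ℝ → ℝ) (hh : ∀ k : Fin m, h k = T 1 (k : ℕ)) :
    ∀ x : Fin (m + 1) → ℝ, Monotone x →
      wedge g x =
        (∏ k, g 0 (x k)) *
          ∫ y in {y : Fin m → ℝ |
              ∀ i : Fin m, x i.castSucc ≤ y i ∧ y i ≤ x i.succ}, wedge h y := by
  intro x hx
  have hc (k : Fin m) : Continuous (h k) :=
    hh k ▸ continuous_iteratedIntegral hT0 hP hTs (hρ 1 k.pos) (by omega)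
  have hQ (k : Fin m) (t : ℝ) : HasDerivAt (P 0 k) (h k t) t :=
    hh k ▸ hP 0 k (by omega) t
  have hg_succ (k : Fin m) (t : ℝ) : g k.succ t = g 0 t * P 0 k t := by
    simp [hg, hT0, hTs 0 k (by omega)]
  exact wedge_as_interlacing_integral_general hg_succ
    (fun k a b => (hc k).intervalIntegrable a b)
    (fun k a b => intervalIntegral.integral_eq_sub_of_hasDerivAt (fun t _ => hQ k t)
      ((hc k).intervalIntegrable a b)) hx
end

section
/- Let n ≥ 2 and let H : ℝ^{n−1} → ℝ be a continuous symmetric function. For x in the open Weyl chamber {x ∈ ℝ^n : x_1 > x_2 > ⋯ > x_n}, define G(x) = (1/Δ_n(x)) ∫_{y ⪯ x} H(y) Δ_{n−1}(y) dy, the integral being over y ∈ ℝ^{n−1} interlacing with x. Then G extends to a continuous function on the closed Weyl chamber {x ∈ ℝ^n : x_1 ≥ x_2 ≥ ⋯ ≥ x_n}, and if H is strictly positive then so is this extension. -/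
/-!
For a polynomial `p`, the function `∏ j, p (-y j) * vdm y` is a determinant `det (q j (-y i))`, so
its integral over the interlacing box is a determinant of polynomials in the `-x i`, hence
divisible by `vdm x`: for these test functions `G` is a polynomial in `x`. The test functions are
closed under multiplication, and they separate ordered tuples because `∏ j, (c + y j)`, as a
polynomial in `c`, determines `y` up to order. By Stone–Weierstrass their linear combinations
approximate `H` uniformly on the ordered tuples of bounded norm. As the integral of `vdm` over the
box is `vdm x / (n - 1)!`, the map `H ↦ G` is bounded for the sup norm, so `G` inherits limits at
the walls of the chamber, and `G` is bounded below by `min H / (n - 1)!`.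
-/

open Finset MeasureTheory

open Filter Polynomial Topology

section Determinants

variable {R : Type*} [CommRing R] {n : ℕ}

theorem of_eval_eq_vandermonde_mul (x : Fin n → R) (p : Fin n → R[X]) :
    Matrix.of (fun i j => (p j).eval (x i)) =
      Matrix.vandermonde x *
        Matrix.of fun k j : Fin n => (p j %ₘ ∏ i, (X - C (x i))).coeff k := by
  set P : R[X] := ∏ i, (X - C (x i)) with hP
  have hmonic : P.Monic := monic_prod_X_sub_C x univ
  have hdegree : P.degree ≤ n := by
    simpa using (degree_prod_le univ _).trans
      (sum_le_card_nsmul univ _ 1 fun i _ => degree_X_sub_C_le (x i))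
  ext i j
  have hroot : P.eval (x i) = 0 := by
    rw [hP, eval_prod]
    exact prod_eq_zero (mem_univ i) (by simp)
  calc (p j).eval (x i) = (p j %ₘ P).eval (x i) := by
        conv_lhs => rw [← modByMonic_add_div (p j) P]
        simp [hroot]
    _ = ∑ k : Fin n, x i ^ (k : ℕ) * (p j %ₘ P).coeff k := by
        conv_lhs => rw [← sum_modByMonic_coeff hmonic hdegree, eval_finsetSum]
        simp only [eval_monomial, mul_comm]

theorem exists_det_eval_eq_det_vandermonde_mul (p : Fin n → R[X]) :
    ∃ Q : MvPolynomial (Fin n) R, ∀ x : Fin n → R,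
      (Matrix.of fun i j => (p j).eval (x i)).det =
        (Matrix.vandermonde x).det * MvPolynomial.eval x Q := by
  let M : Matrix (Fin n) (Fin n) (MvPolynomial (Fin n) R) := Matrix.of fun k j =>
    ((p j).map MvPolynomial.C %ₘ ∏ i, (X - C (MvPolynomial.X i))).coeff k
  refine ⟨M.det, fun x => ?_⟩
  have hgeneric := congrArg (MvPolynomial.eval x).mapMatrix
    (of_eval_eq_vandermonde_mul MvPolynomial.X fun j => (p j).map MvPolynomial.C)
  have heval : (MvPolynomial.eval x).mapMatrix
      (Matrix.of fun i j => ((p j).map MvPolynomial.C).eval (MvPolynomial.X i)) =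
        Matrix.of fun i j => (p j).eval (x i) := by
    have hC : (MvPolynomial.eval x).comp MvPolynomial.C = RingHom.id R := by ext; simp
    ext i j
    simp [eval_map, hom_eval₂, hC, eval₂_id]
  have hvandermonde : (MvPolynomial.eval x).mapMatrix (Matrix.vandermonde MvPolynomial.X) =
      Matrix.vandermonde x := by
    ext i j
    simp
  rw [heval, map_mul, hvandermonde] at hgeneric
  rw [hgeneric, Matrix.det_mul, RingHom.map_det]

theorem det_eq_det_sub_of_col_zero_eq_one (A : Matrix (Fin (n + 1)) (Fin (n + 1)) R)
    (hA : ∀ i, A i 0 = 1) :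
    A.det = (Matrix.of fun i j : Fin n => A i.succ j.succ - A i.castSucc j.succ).det := by
  let B : Matrix (Fin (n + 1)) (Fin (n + 1)) R :=
    Fin.cons (A 0) fun i j => A i.succ j - A i.castSucc j
  have hAB : A.det = B.det :=
    Matrix.det_eq_of_forall_row_eq_smul_add_pred (fun _ => 1) (by simp [B]) (by simp [B])
  have hB_succ (i : Fin n) : B i.succ 0 = 0 := by simp [B, hA]
  have hB_zero : B 0 0 = 1 := hA 0
  rw [hAB, Matrix.det_succ_column_zero, Fin.sum_univ_succ]
  simp only [hB_succ, hB_zero, Fin.val_zero, pow_zero, mul_zero, zero_mul, mul_one, one_mul,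
    sum_const_zero, add_zero]
  rfl

end Determinants

theorem integral_pi_det {ι 𝕜 : Type*} [Fintype ι] [DecidableEq ι] [RCLike 𝕜] {α : ι → Type*}
    [∀ i, MeasurableSpace (α i)] (μ : ∀ i, Measure (α i)) [∀ i, SigmaFinite (μ i)]
    {f : ∀ i, ι → α i → 𝕜} (hf : ∀ i j, Integrable (f i j) (μ i)) :
    ∫ y, (Matrix.of fun i j => f i j (y i)).det ∂Measure.pi μ =
      (Matrix.of fun i j => ∫ t, f i j t ∂μ i).det := by
  simp only [← Matrix.det_transpose (Matrix.of _), Matrix.det_apply', Matrix.transpose_apply,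
    Matrix.of_apply]
  rw [integral_finsetSum _ fun σ _ =>
    (Integrable.fintype_prod_dep fun i => hf i (σ i)).const_mul _]
  refine sum_congr rfl fun σ _ => ?_
  rw [integral_const_mul, integral_fintype_prod_eq_prod]

theorem polynomial_derivative_surjective {K : Type*} [Field K] [CharZero K] :
    Function.Surjective (derivative : K[X] →ₗ[K] K[X]) := by
  intro p
  induction p using Polynomial.induction_on' with
  | add p q hp hq =>
    obtain ⟨P, rfl⟩ := hp
    obtain ⟨Q, rfl⟩ := hq
    exact ⟨P + Q, map_add _ _ _⟩
  | monomial k a =>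
    refine ⟨monomial (k + 1) (a / (k + 1)), ?_⟩
    have hk : (k + 1 : K) ≠ 0 := by exact_mod_cast k.succ_ne_zero
    simp [hk]

theorem exists_mem_subalgebra_near_of_continuousOn {X : Type*} [TopologicalSpace X]
    {A : Subalgebra ℝ C(X, ℝ)} {K : Set X} (hK : IsCompact K)
    (hA : ∀ x ∈ K, ∀ y ∈ K, x ≠ y → ∃ f ∈ A, f x ≠ f y) {h : X → ℝ} (hh : ContinuousOn h K)
    {ε : ℝ} (hε : 0 < ε) : ∃ g ∈ A, ∀ x ∈ K, |g x - h x| < ε := by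
  have : CompactSpace K := isCompact_iff_compactSpace.1 hK
  let restrictToK : C(X, ℝ) →ₐ[ℝ] C(K, ℝ) :=
    ContinuousMap.compRightAlgHom ℝ ℝ ⟨Subtype.val, continuous_subtype_val⟩
  have hsep : (A.map restrictToK).SeparatesPoints := by
    intro x y hxy
    obtain ⟨f, hf, hfxy⟩ := hA x x.2 y y.2 (Subtype.coe_injective.ne hxy)
    exact ⟨_, ⟨_, ⟨f, hf, rfl⟩, rfl⟩, hfxy⟩
  obtain ⟨⟨_, g, hg, rfl⟩, hgh⟩ :=
    ContinuousMap.exists_mem_subalgebra_near_continuous_of_separatesPoints _ hsep _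
      hh.domRestrict ε hε
  exact ⟨g, hg, fun x hx => hgh ⟨x, hx⟩⟩

theorem exists_tendsto_of_forall_eventually_dist_lt {α E : Type*} [PseudoMetricSpace E]
    [CompleteSpace E] {l : Filter α} [NeBot l] {F : α → E}
    (h : ∀ ε > 0, ∃ a, ∀ᶠ z in l, dist (F z) a < ε) : ∃ b, Tendsto F l (𝓝 b) := by
  rw [← cauchy_map_iff_exists_tendsto, Metric.cauchy_iff]
  refine ⟨inferInstance, fun ε hε => ?_⟩
  obtain ⟨a, ha⟩ := h (ε / 2) (half_pos hε)
  refine ⟨Metric.ball a (ε / 2), ha, fun u hu v hv => ?_⟩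
  linarith [dist_triangle_right u v a, Metric.mem_ball.1 hu, Metric.mem_ball.1 hv]

section WeylChamber

variable {n : ℕ}

theorem eq_of_map_univ_eq_of_antitone {α : Type*} [PartialOrder α] {y z : Fin n → α}
    (hy : Antitone y) (hz : Antitone z)
    (h : (univ : Finset (Fin n)).val.map y = (univ : Finset (Fin n)).val.map z) : y = z := by
  rw [Fin.univ_val_map, Fin.univ_val_map, Multiset.coe_eq_coe] at h
  exact List.ofFn_injective (h.eq_of_pairwise' hy.sortedGE_ofFn.pairwise hz.sortedGE_ofFn.pairwise)

theorem isCompact_closedBall_inter_antitone (r : ℝ) :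
    IsCompact (Metric.closedBall (0 : Fin n → ℝ) r ∩ {y | Antitone y}) :=
  (isCompact_closedBall 0 r).inter_right isClosed_antitone

theorem mem_closure_strictAnti_of_antitone {x : Fin n → ℝ} (hx : Antitone x) :
    x ∈ closure {x : Fin n → ℝ | StrictAnti x} := by
  have hcont : Continuous fun (t : ℝ) (i : Fin n) => x i - t * (i : ℕ) := by fun_prop
  have hlim : Tendsto (fun (t : ℝ) (i : Fin n) => x i - t * (i : ℕ)) (𝓝[>] 0) (𝓝 x) := by
    simpa using (hcont.tendsto 0).mono_left nhdsWithin_le_nhds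
  refine mem_closure_of_tendsto hlim ?_
  filter_upwards [self_mem_nhdsWithin] with t (ht : 0 < t) i j hij
  calc x j - t * (j : ℕ) ≤ x i - t * (j : ℕ) := by gcongr; exact hx hij.le
    _ < x i - t * (i : ℕ) := by gcongr; exact hij

theorem continuous_vdm : Continuous (vdm : (Fin n → ℝ) → ℝ) := by
  unfold vdm
  fun_prop

theorem vdm_eq_det_vandermonde_neg (x : Fin n → ℝ) : vdm x = (Matrix.vandermonde (-x)).det := by
  simp only [vdm, Matrix.det_vandermonde, Pi.neg_apply, neg_sub_neg]

theorem vdm_pos {x : Fin n → ℝ} (hx : StrictAnti x) : 0 < vdm x :=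
  prod_pos fun _ _ => prod_pos fun _ hj => sub_pos.2 (hx (mem_Ioi.1 hj))

theorem vdm_nonneg {x : Fin n → ℝ} (hx : Antitone x) : 0 ≤ vdm x :=
  prod_nonneg fun _ _ => prod_nonneg fun _ hj => sub_nonneg.2 (hx (mem_Ioi.1 hj).le)

end WeylChamber

section Interlacing

variable {m : ℕ} {x : Fin (m + 1) → ℝ}

/-- The box `{y | y ⪯ x}` of the points `y` interlacing with `x`. -/
def interlacing (x : Fin (m + 1) → ℝ) : Set (Fin m → ℝ) :=
  {y | ∀ i : Fin m, x i.succ ≤ y i ∧ y i ≤ x i.castSucc}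

theorem interlacing_eq_pi (x : Fin (m + 1) → ℝ) :
    interlacing x = Set.univ.pi fun i : Fin m => Set.Icc (x i.succ) (x i.castSucc) := by
  ext y
  simp only [interlacing, Set.mem_ofPred_eq, Set.mem_univ_pi, Set.mem_Icc]

theorem isCompact_interlacing (x : Fin (m + 1) → ℝ) : IsCompact (interlacing x) := by
  rw [interlacing_eq_pi]
  exact isCompact_univ_pi fun _ => isCompact_Icc

theorem antitone_of_mem_interlacing (hx : Antitone x) {y : Fin m → ℝ} (hy : y ∈ interlacing x) :
    Antitone y := by
  intro i j hij
  rcases hij.eq_or_lt with rfl | hlt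
  · rfl
  · exact (hy j).2.trans ((hx (Fin.succ_le_castSucc_iff.2 hlt)).trans (hy i).1)

theorem norm_le_of_mem_interlacing {y : Fin m → ℝ} (hy : y ∈ interlacing x) : ‖y‖ ≤ ‖x‖ := by
  refine (pi_norm_le_iff_of_nonneg (norm_nonneg x)).2 fun i => ?_
  exact (abs_le_max_abs_abs (hy i).1 (hy i).2).trans
    (max_le (norm_le_pi_norm x _) (norm_le_pi_norm x _))

theorem integrableOn_interlacing_mul_vdm (hx : Antitone x) {f : (Fin m → ℝ) → ℝ}
    (hf : ContinuousOn f {y | Antitone y}) :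
    IntegrableOn (fun y => f y * vdm y) (interlacing x) :=
  ((hf.mono fun _ => antitone_of_mem_interlacing hx).mul
    continuous_vdm.continuousOn).integrableOn_compact (isCompact_interlacing x)

theorem setIntegral_interlacing_det (hx : Antitone x) {f : Fin m → ℝ → ℝ}
    (hf : ∀ j, Continuous (f j)) {F : Fin (m + 1) → ℝ → ℝ} (hF_zero : ∀ t, F 0 t = 1)
    (hF_succ : ∀ (j : Fin m) t, HasDerivAt (F j.succ) (-f j t) t) :
    ∫ y in interlacing x, (Matrix.of fun i j => f j (y i)).det =
      (Matrix.of fun i j => F j (x i)).det := by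
  rw [det_eq_det_sub_of_col_zero_eq_one _ fun i => hF_zero (x i), interlacing_eq_pi, volume_pi,
    Measure.restrict_pi_pi, integral_pi_det _ fun _ j => (hf j).integrableOn_Icc]
  congr 1
  ext i j
  have hFTC := intervalIntegral.integral_eq_sub_of_hasDerivAt (a := x i.succ)
    (b := x i.castSucc) (fun t _ => hF_succ j t) ((hf j).neg.intervalIntegrable _ _)
  rw [intervalIntegral.integral_neg,
    intervalIntegral.integral_of_le (hx (Fin.castSucc_le_succ i)),
    ← integral_Icc_eq_integral_Ioc] at hFTC
  simp only [Matrix.of_apply]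
  linarith

theorem setIntegral_interlacing_vdm (hx : Antitone x) :
    ∫ y in interlacing x, vdm y = vdm x / m.factorial := by
  have hdet (y : Fin m → ℝ) :
      (Matrix.of fun i j : Fin m => ((j : ℕ) + 1 : ℝ) * (-y i) ^ (j : ℕ)).det =
        m.factorial * vdm y := by
    rw [vdm_eq_det_vandermonde_neg, ← prod_range_add_one_eq_factorial,
      ← Fin.prod_univ_eq_prod_range]
    push_cast
    exact Matrix.det_mul_row _ _
  have hderiv (k : ℕ) (t : ℝ) :
      HasDerivAt (fun t : ℝ => (-t) ^ (k + 1)) (-((k + 1 : ℝ) * (-t) ^ k)) t := by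
    simpa using (hasDerivAt_neg t).fun_pow (k + 1)
  have key := setIntegral_interlacing_det hx
    (f := fun j t => ((j : ℕ) + 1 : ℝ) * (-t) ^ (j : ℕ)) (fun j => by fun_prop)
    (F := fun j t => (-t) ^ (j : ℕ)) (fun t => pow_zero _) fun j t => hderiv j t
  simp only [hdet, integral_const_mul] at key
  rw [eq_div_iff (by positivity), mul_comm, key, vdm_eq_det_vandermonde_neg]
  rfl

/-- The integral of `H * vdm` over the interlacing box of `x`, normalised by `vdm x`: the function
`G` of the theorem. It is meaningful on the open Weyl chamber; on the walls `vdm x = 0`, and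
division by zero gives the value `0`. -/
noncomputable def interlacingIntegral (H : (Fin m → ℝ) → ℝ) (x : Fin (m + 1) → ℝ) : ℝ :=
  (1 / vdm x) * ∫ y in interlacing x, H y * vdm y

theorem interlacingIntegral_const (c : ℝ) (hx : StrictAnti x) :
    interlacingIntegral (fun _ => c) x = c / m.factorial := by
  have := (vdm_pos hx).ne'
  rw [interlacingIntegral, integral_const_mul, setIntegral_interlacing_vdm hx.antitone]
  field_simp

theorem interlacingIntegral_mono (hx : StrictAnti x) {f g : (Fin m → ℝ) → ℝ}
    (hf : ContinuousOn f {y | Antitone y}) (hg : ContinuousOn g {y | Antitone y})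
    (hfg : ∀ y ∈ interlacing x, f y ≤ g y) : interlacingIntegral f x ≤ interlacingIntegral g x := by
  refine mul_le_mul_of_nonneg_left ?_ (one_div_nonneg.2 (vdm_pos hx).le)
  refine setIntegral_mono_on (integrableOn_interlacing_mul_vdm hx.antitone hf)
    (integrableOn_interlacing_mul_vdm hx.antitone hg) (isCompact_interlacing x).measurableSet
    fun y hy => ?_
  gcongr
  · exact vdm_nonneg (antitone_of_mem_interlacing hx.antitone hy)
  · exact hfg y hy

theorem interlacingIntegral_add (hx : Antitone x) {f g : (Fin m → ℝ) → ℝ}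
    (hf : ContinuousOn f {y | Antitone y}) (hg : ContinuousOn g {y | Antitone y}) :
    interlacingIntegral (fun y => f y + g y) x =
      interlacingIntegral f x + interlacingIntegral g x := by
  simp only [interlacingIntegral, add_mul]
  rw [integral_add (integrableOn_interlacing_mul_vdm hx hf)
    (integrableOn_interlacing_mul_vdm hx hg), mul_add]

theorem interlacingIntegral_const_mul (c : ℝ) (f : (Fin m → ℝ) → ℝ) (x : Fin (m + 1) → ℝ) :
    interlacingIntegral (fun y => c * f y) x = c * interlacingIntegral f x := by
  simp only [interlacingIntegral, mul_assoc, integral_const_mul]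
  ring

theorem interlacingIntegral_le_add_div_factorial (hx : StrictAnti x) {f g : (Fin m → ℝ) → ℝ}
    (hf : ContinuousOn f {y | Antitone y}) (hg : ContinuousOn g {y | Antitone y}) {ε : ℝ}
    (hfg : ∀ y ∈ interlacing x, f y ≤ g y + ε) :
    interlacingIntegral f x ≤ interlacingIntegral g x + ε / m.factorial := by
  rw [← interlacingIntegral_const ε hx, ← interlacingIntegral_add hx.antitone hg continuousOn_const]
  exact interlacingIntegral_mono hx hf (hg.add continuousOn_const) hfg

theorem dist_interlacingIntegral_le (hx : StrictAnti x) {f g : (Fin m → ℝ) → ℝ}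
    (hf : ContinuousOn f {y | Antitone y}) (hg : ContinuousOn g {y | Antitone y}) {ε : ℝ}
    (hfg : ∀ y ∈ interlacing x, |f y - g y| ≤ ε) :
    dist (interlacingIntegral f x) (interlacingIntegral g x) ≤ ε / m.factorial := by
  rw [Real.dist_eq, abs_sub_le_iff, sub_le_iff_le_add', sub_le_iff_le_add']
  constructor
  · exact interlacingIntegral_le_add_div_factorial hx hf hg fun y hy =>
      sub_le_iff_le_add'.1 (abs_sub_le_iff.1 (hfg y hy)).1
  · exact interlacingIntegral_le_add_div_factorial hx hg hf fun y hy =>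
      sub_le_iff_le_add'.1 (abs_sub_le_iff.1 (hfg y hy)).2

end Interlacing

section TestFunctions

variable {m : ℕ}

/-- The test function `y ↦ ∏ j, p (-y j)` attached to a polynomial `p`, as a monoid homomorphism
in `p`. The sign matches `vdm y = det ((-y i) ^ j)`. -/
noncomputable def prodEvalNeg (m : ℕ) : ℝ[X] →* C(Fin m → ℝ, ℝ) where
  toFun p := ⟨fun y => ∏ j, p.eval (-y j), by fun_prop⟩
  map_one' := by ext; simp
  map_mul' p q := by ext; simp [prod_mul_distrib]

theorem prodEvalNeg_apply (p : ℝ[X]) (y : Fin m → ℝ) :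
    prodEvalNeg m p y = ∏ j, p.eval (-y j) := rfl

/-- The algebra of test functions generated by the products `∏ j, p (-y j)`. As these products are
closed under multiplication, it is also their linear span. -/
noncomputable def prodEvalNegAlgebra (m : ℕ) : Subalgebra ℝ C(Fin m → ℝ, ℝ) :=
  Algebra.adjoin ℝ (MonoidHom.mrange (prodEvalNeg m))

theorem prodEvalNeg_mul_vdm (p : ℝ[X]) (y : Fin m → ℝ) :
    prodEvalNeg m p y * vdm y =
      (Matrix.of fun i j : Fin m => (p * X ^ (j : ℕ)).eval (-y i)).det := by
  rw [prodEvalNeg_apply, vdm_eq_det_vandermonde_neg, ← Matrix.det_mul_column]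
  simp

theorem exists_continuous_eq_interlacingIntegral_prodEvalNeg (p : ℝ[X]) :
    ∃ Q : (Fin (m + 1) → ℝ) → ℝ, Continuous Q ∧
      ∀ x, StrictAnti x → interlacingIntegral (prodEvalNeg m p) x = Q x := by
  choose P hP using fun j : Fin m => polynomial_derivative_surjective (p * X ^ (j : ℕ))
  obtain ⟨Q, hQ⟩ := exists_det_eval_eq_det_vandermonde_mul (Fin.cons 1 P : Fin (m + 1) → ℝ[X])
  refine ⟨fun x => MvPolynomial.eval (-x) Q, Q.continuous_eval.comp continuous_neg, fun x hx => ?_⟩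
  have hderiv (j : Fin m) (t : ℝ) :
      HasDerivAt (fun t => (P j).eval (-t)) (-(p * X ^ (j : ℕ)).eval (-t)) t := by
    simpa [hP, Function.comp_def] using ((P j).hasDerivAt (-t)).comp t (hasDerivAt_neg t)
  have hint := calc
    ∫ y in interlacing x, prodEvalNeg m p y * vdm y
      = ∫ y in interlacing x,
          (Matrix.of fun i j : Fin m => (p * X ^ (j : ℕ)).eval (-y i)).det := by
        simp only [prodEvalNeg_mul_vdm]
    _ = (Matrix.of fun i j => ((Fin.cons 1 P : Fin (m + 1) → ℝ[X]) j).eval (-x i)).det :=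
        setIntegral_interlacing_det hx.antitone (f := fun j t => (p * X ^ (j : ℕ)).eval (-t))
          (fun j => by fun_prop)
          (F := fun j t => ((Fin.cons 1 P : Fin (m + 1) → ℝ[X]) j).eval (-t))
          (fun _ => eval_one) (by simpa using hderiv)
    _ = vdm x * MvPolynomial.eval (-x) Q := by
        rw [vdm_eq_det_vandermonde_neg]
        exact hQ (-x)
  have := (vdm_pos hx).ne'
  rw [interlacingIntegral, hint]
  field_simp

theorem exists_continuous_eq_interlacingIntegral {f : C(Fin m → ℝ, ℝ)}
    (hf : f ∈ prodEvalNegAlgebra m) :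
    ∃ Q : (Fin (m + 1) → ℝ) → ℝ, Continuous Q ∧
      ∀ x, StrictAnti x → interlacingIntegral f x = Q x := by
  rw [← Subalgebra.mem_toSubmodule, prodEvalNegAlgebra, Algebra.adjoin_eq_span,
    Submonoid.closure_eq] at hf
  induction hf using Submodule.span_induction with
  | mem f hf =>
    obtain ⟨p, rfl⟩ := hf
    exact exists_continuous_eq_interlacingIntegral_prodEvalNeg p
  | zero => exact ⟨0, continuous_zero, fun x _ => by simp [interlacingIntegral]⟩
  | add f g _ _ hf hg =>
    obtain ⟨P, hP, hfP⟩ := hf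
    obtain ⟨Q, hQ, hgQ⟩ := hg
    refine ⟨P + Q, hP.add hQ, fun x hx => ?_⟩
    rw [Pi.add_apply, ← hfP x hx, ← hgQ x hx]
    exact interlacingIntegral_add hx.antitone f.continuous.continuousOn g.continuous.continuousOn
  | smul c f _ hf =>
    obtain ⟨Q, hQ, hfQ⟩ := hf
    refine ⟨fun x => c * Q x, hQ.const_mul c, fun x hx => ?_⟩
    simp only [← hfQ x hx]
    exact interlacingIntegral_const_mul c f x

theorem exists_prodEvalNeg_ne {y z : Fin m → ℝ} (hy : Antitone y) (hz : Antitone z)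
    (hyz : y ≠ z) : ∃ p, prodEvalNeg m p y ≠ prodEvalNeg m p z := by
  by_contra! heq
  refine hyz (eq_of_map_univ_eq_of_antitone hy hz ?_)
  have hroots (w : Fin m → ℝ) : (∏ i, (X - C (w i))).roots = univ.val.map w := by
    rw [← roots_multiset_prod_X_sub_C (univ.val.map w), Multiset.map_map]
    rfl
  have hpoly : ∏ i, (X - C (y i)) = ∏ i, (X - C (z i)) := by
    refine Polynomial.funext fun c => ?_
    have hc := heq (X + C c)
    simpa [prodEvalNeg_apply, eval_prod, sub_eq_neg_add] using hc
  rw [← hroots y, ← hroots z, hpoly]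

theorem exists_mem_prodEvalNegAlgebra_near {H : (Fin m → ℝ) → ℝ}
    (hH : ContinuousOn H {y | Antitone y}) (r : ℝ) {ε : ℝ} (hε : 0 < ε) :
    ∃ f ∈ prodEvalNegAlgebra m, ∀ y, Antitone y → ‖y‖ ≤ r → |f y - H y| < ε := by
  obtain ⟨f, hf, hfH⟩ := exists_mem_subalgebra_near_of_continuousOn (A := prodEvalNegAlgebra m)
    (isCompact_closedBall_inter_antitone r)
    (fun y hy z hz hyz =>
      have ⟨p, hp⟩ := exists_prodEvalNeg_ne hy.2 hz.2 hyz
      ⟨prodEvalNeg m p, Algebra.subset_adjoin ⟨p, rfl⟩, hp⟩) (hH.mono Set.inter_subset_right) hε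
  exact ⟨f, hf, fun y hy hyr => hfH y ⟨mem_closedBall_zero_iff.2 hyr, hy⟩⟩

end TestFunctions

section Extension

variable {m : ℕ} {H : (Fin m → ℝ) → ℝ} {x : Fin (m + 1) → ℝ}

theorem eventually_strictAnti_norm_le (x : Fin (m + 1) → ℝ) :
    ∀ᶠ z in 𝓝[{x | StrictAnti x}] x, StrictAnti z ∧ ‖z‖ ≤ ‖x‖ + 1 :=
  eventually_mem_nhdsWithin.and <| nhdsWithin_le_nhds <|
    (continuous_norm.tendsto x).eventually_le_const (lt_add_one ‖x‖)

theorem exists_tendsto_interlacingIntegral (hH : ContinuousOn H {y | Antitone y})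
    (hx : Antitone x) :
    ∃ L, Tendsto (interlacingIntegral H) (𝓝[{x | StrictAnti x}] x) (𝓝 L) := by
  have : NeBot (𝓝[{x | StrictAnti x}] x) :=
    mem_closure_iff_nhdsWithin_neBot.1 (mem_closure_strictAnti_of_antitone hx)
  refine exists_tendsto_of_forall_eventually_dist_lt fun ε hε => ?_
  obtain ⟨f, hf, hfH⟩ := exists_mem_prodEvalNegAlgebra_near hH (‖x‖ + 1)
    (ε := ε / 2 * m.factorial) (by positivity)
  obtain ⟨Q, hQ, hfQ⟩ := exists_continuous_eq_interlacingIntegral hf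
  have hQx : ∀ᶠ z in 𝓝[{x | StrictAnti x}] x, dist (Q z) (Q x) < ε / 2 :=
    nhdsWithin_le_nhds (Metric.tendsto_nhds.1 (hQ.tendsto x) _ (half_pos hε))
  refine ⟨Q x, ?_⟩
  filter_upwards [hQx, eventually_strictAnti_norm_le x] with z hzQ ⟨hz, hzx⟩
  have hHQ : dist (interlacingIntegral H z) (Q z) ≤ ε / 2 := by
    rw [← hfQ z hz, dist_comm,
      ← mul_div_cancel_right₀ (ε / 2) (Nat.cast_ne_zero.2 m.factorial_ne_zero)]
    exact dist_interlacingIntegral_le hz f.continuous.continuousOn hH fun y hy =>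
      (hfH y (antitone_of_mem_interlacing hz.antitone hy)
        ((norm_le_of_mem_interlacing hy).trans hzx)).le
  linarith [dist_triangle (interlacingIntegral H z) (Q z) (Q x)]

theorem exists_pos_eventually_le_interlacingIntegral (hH : ContinuousOn H {y | Antitone y})
    (hpos : ∀ y, Antitone y → 0 < H y) (x : Fin (m + 1) → ℝ) :
    ∃ δ > 0, ∀ᶠ z in 𝓝[{x | StrictAnti x}] x, δ ≤ interlacingIntegral H z := by
  obtain ⟨y₀, hy₀, hmin⟩ := (isCompact_closedBall_inter_antitone (‖x‖ + 1)).exists_isMinOn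
    ⟨0, Metric.mem_closedBall_self (by positivity), antitone_const⟩
    (hH.mono Set.inter_subset_right)
  refine ⟨H y₀ / m.factorial, div_pos (hpos y₀ hy₀.2) (by positivity), ?_⟩
  filter_upwards [eventually_strictAnti_norm_le x] with z ⟨hz, hzx⟩
  rw [← interlacingIntegral_const _ hz]
  refine interlacingIntegral_mono hz continuousOn_const hH fun y hy => hmin ⟨?_, ?_⟩
  · simpa using (norm_le_of_mem_interlacing hy).trans hzx
  · exact antitone_of_mem_interlacing hz.antitone hy

theorem continuousOn_interlacingIntegral (hH : ContinuousOn H {y | Antitone y}) :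
    ContinuousOn (interlacingIntegral H) {x | StrictAnti x} := by
  intro x hx
  obtain ⟨L, hL⟩ := exists_tendsto_interlacingIntegral hH (StrictAnti.antitone hx)
  have hLx : interlacingIntegral H x = L :=
    tendsto_nhds_unique (tendsto_pure_nhds _ x) (hL.mono_left (pure_le_nhdsWithin hx))
  rwa [ContinuousWithinAt, hLx]

end Extension

theorem weyl_chamber_extension_general (m : ℕ) (H : (Fin m → ℝ) → ℝ)
    (hH : ContinuousOn H {y | Antitone y}) :
    ∃ G : (Fin (m + 1) → ℝ) → ℝ,
      ContinuousOn G {x : Fin (m + 1) → ℝ | Antitone x} ∧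
      Set.EqOn G (interlacingIntegral H) {x : Fin (m + 1) → ℝ | StrictAnti x} ∧
      ((∀ y : Fin m → ℝ, Antitone y → 0 < H y) →
        ∀ x : Fin (m + 1) → ℝ, Antitone x → 0 < G x) := by
  refine ⟨extendFrom {x | StrictAnti x} (interlacingIntegral H), ?_, ?_, fun hpos x hx => ?_⟩
  · exact continuousOn_extendFrom (fun _ => mem_closure_strictAnti_of_antitone)
      fun _ => exists_tendsto_interlacingIntegral hH
  · exact fun x hx => extendFrom_extends (continuousOn_interlacingIntegral hH) x hx
  · have : NeBot (𝓝[{x | StrictAnti x}] x) :=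
      mem_closure_iff_nhdsWithin_neBot.1 (mem_closure_strictAnti_of_antitone hx)
    obtain ⟨δ, hδ, hle⟩ := exists_pos_eventually_le_interlacingIntegral hH hpos x
    exact hδ.trans_le
      (ge_of_tendsto (tendsto_extendFrom (exists_tendsto_interlacingIntegral hH hx)) hle)

/-- For a continuous symmetric `H : ℝ^{n−1} → ℝ` (with `n = m + 1 ≥ 2`), the function
G(x) = (1/Δ_n(x)) ∫_{y ⪯ x} H(y) Δ_{n−1}(y) dy, defined on the open Weyl chamber
`x_1 > ⋯ > x_n`, extends continuously to the closed Weyl chamber `x_1 ≥ ⋯ ≥ x_n`,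
and the extension is strictly positive whenever `H` is. -/
theorem weyl_chamber_extension (m : ℕ) (hm : 1 ≤ m)
    (H : (Fin m → ℝ) → ℝ)
    (hHcont : Continuous H)
    (hHsymm : ∀ (σ : Equiv.Perm (Fin m)) (y : Fin m → ℝ), H (y ∘ σ) = H y) :
    ∃ G : (Fin (m + 1) → ℝ) → ℝ,
      ContinuousOn G {x : Fin (m + 1) → ℝ | Antitone x} ∧
      (∀ x : Fin (m + 1) → ℝ, StrictAnti x →
        G x = (1 / vdm x) *
          ∫ y in {y : Fin m → ℝ |
              ∀ i : Fin m, x i.succ ≤ y i ∧ y i ≤ x i.castSucc}, H y * vdm y) ∧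
      ((∀ y : Fin m → ℝ, 0 < H y) →
        ∀ x : Fin (m + 1) → ℝ, Antitone x → 0 < G x) := by
  obtain ⟨G, hG, hGeq, hGpos⟩ := weyl_chamber_extension_general m H hHcont.continuousOn
  exact ⟨G, hG, fun _ hx => hGeq hx, fun hpos => hGpos fun y _ => hpos y⟩
end

section
/- Let f_1, f_2 : ℝ → ℝ be continuous with f_2 strictly positive. Then the function (x_1,x_2) ↦ (f_1(x_1)f_2(x_2) − f_1(x_2)f_2(x_1))/(x_1 − x_2), defined off the diagonal of ℝ^2, extends continuously to ℝ^2 if and only if the ratio f_1/f_2 is continuously differentiable. In that case, denoting by E the continuous extension, for all a, b ∈ ℝ: f_1(b)/f_2(b) − f_1(a)/f_2(a) = ∫_a^b E(x,x)/f_2(x)^2 dx. -/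
open MeasureTheory

/-!
Write `g = f₁ / f₂`. Off the diagonal, `(f₁ ∧ f₂) / Δ₂` is `f₂ x₁ * f₂ x₂` times the slope of `g`
between `x₁` and `x₂`, and the factor is continuous and nowhere zero. So a continuous extension
exists exactly when the slope of `g` has one. A continuous extension of the slope takes the value
`deriv g x` at `(x, x)`, which makes `g` continuously differentiable. Conversely, a `C¹` function
is strictly differentiable, which says that its slope converges to the derivative when both
arguments move. On the diagonal this gives `E x x = f₂ x ^ 2 * deriv g x`, so the integral formula
is the fundamental theorem of calculus for `g`.
-/

open Function Set Topology

/-- `IsOffDiagExtension q E` says that `E` is a continuous extension to `X × X` of the function `q`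
of two variables, whose values on the diagonal are disregarded. -/
def IsOffDiagExtension {X Y : Type*} [TopologicalSpace X] [TopologicalSpace Y]
    (q E : X → X → Y) : Prop :=
  Continuous (fun p : X × X => E p.1 p.2) ∧ ∀ x y, x ≠ y → E x y = q x y

/-- The quotient `(f₁ ∧ f₂) / Δ₂` of the `2 × 2` determinant of `f₁` and `f₂` by the difference of
the variables, for vector-valued `f₁` and scalar `f₂`. Its value on the diagonal is the junk
value `0`. -/
def wedgeQuotient {𝕜 K F : Type*} [Field 𝕜] [Field K] [AddCommGroup F] [Module 𝕜 F] [Module K F]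
    (f₁ : 𝕜 → F) (f₂ : 𝕜 → K) (x y : 𝕜) : F :=
  (x - y)⁻¹ • (f₂ y • f₁ x - f₂ x • f₁ y)

theorem IsOffDiagExtension.smul {X K F : Type*} [TopologicalSpace X] [TopologicalSpace K]
    [TopologicalSpace F] [SMul K F] [ContinuousSMul K F] {q E : X → X → F} {w : X → X → K}
    (hE : IsOffDiagExtension q E) (hw : Continuous fun p : X × X => w p.1 p.2) :
    IsOffDiagExtension (fun x y => w x y • q x y) (fun x y => w x y • E x y) :=
  ⟨hw.smul hE.1, fun x y hxy => congrArg (w x y • ·) (hE.2 x y hxy)⟩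

theorem isOffDiagExtension_smul_iff {X K F : Type*} [TopologicalSpace X] [TopologicalSpace K]
    [GroupWithZero K] [ContinuousInv₀ K] [TopologicalSpace F] [MulAction K F] [ContinuousSMul K F]
    {q E : X → X → F} {w : X → X → K} (hw : Continuous fun p : X × X => w p.1 p.2)
    (hw₀ : ∀ x y, w x y ≠ 0) :
    IsOffDiagExtension (fun x y => w x y • q x y) E ↔
      IsOffDiagExtension q (fun x y => (w x y)⁻¹ • E x y) := by
  constructor <;> intro hE
  · simpa only [inv_smul_smul₀ (hw₀ _ _)] using
      hE.smul (w := fun x y => (w x y)⁻¹) (hw.inv₀ fun p => hw₀ p.1 p.2)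
  · simpa only [smul_inv_smul₀ (hw₀ _ _)] using hE.smul hw

section Slope

variable {𝕜 F : Type*} [NontriviallyNormedField 𝕜] [NormedAddCommGroup F] [NormedSpace 𝕜 F]
  {f : 𝕜 → F}

theorem tendsto_slope_of_hasStrictDerivAt {f' : F} {a : 𝕜} (hf : HasStrictDerivAt f f' a) :
    Filter.Tendsto (fun p : 𝕜 × 𝕜 => slope f p.1 p.2) (𝓝[(diagonal 𝕜)ᶜ] (a, a)) (𝓝 f') := by
  rw [tendsto_iff_norm_sub_tendsto_zero]
  refine ((hasDerivAtFilter_iff_tendsto.1 hf).mono_left nhdsWithin_le_nhds).congr' ?_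
  filter_upwards [self_mem_nhdsWithin] with p (hp : p.1 ≠ p.2)
  rw [slope_comm, slope_def_module, ← norm_inv, ← norm_smul, smul_sub,
    inv_smul_smul₀ (sub_ne_zero.2 hp)]

theorem continuousAt_uncurry_dslope_of_ne {x y : 𝕜} (hx : ContinuousAt f x)
    (hy : ContinuousAt f y) (hxy : x ≠ y) :
    ContinuousAt (fun p : 𝕜 × 𝕜 => dslope f p.1 p.2) (x, y) := by
  have hslope : ContinuousAt (fun p : 𝕜 × 𝕜 => slope f p.1 p.2) (x, y) := by
    simp only [slope_def_module]
    exact ((continuousAt_snd.sub continuousAt_fst).inv₀ (sub_ne_zero.2 hxy.symm)).smul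
      ((hy.comp' continuousAt_snd).sub (hx.comp' continuousAt_fst))
  refine hslope.congr ?_
  filter_upwards [isClosed_diagonal.isOpen_compl.mem_nhds hxy] with p (hp : p.1 ≠ p.2)
  exact (dslope_of_ne f hp.symm).symm

theorem continuousAt_uncurry_dslope_same {a : 𝕜} (hf : HasStrictDerivAt f (deriv f a) a)
    (hf' : ContinuousAt (deriv f) a) :
    ContinuousAt (fun p : 𝕜 × 𝕜 => dslope f p.1 p.2) (a, a) := by
  rw [ContinuousAt, ← nhdsWithin_univ, ← union_compl_self (diagonal 𝕜), nhdsWithin_union,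
    Filter.tendsto_sup, dslope_same]
  constructor
  · have hfst : Filter.Tendsto Prod.fst (𝓝[diagonal 𝕜] (a, a)) (𝓝 a) :=
      continuousAt_fst.mono_left nhdsWithin_le_nhds
    refine (hf'.tendsto.comp hfst).congr' ?_
    filter_upwards [self_mem_nhdsWithin] with p (hp : p.1 = p.2)
    rw [comp_apply, ← hp, dslope_same]
  · refine (tendsto_slope_of_hasStrictDerivAt hf).congr' ?_
    filter_upwards [self_mem_nhdsWithin] with p (hp : p.1 ≠ p.2)
    exact (dslope_of_ne f hp.symm).symm

theorem IsOffDiagExtension.eq_dslope {D : 𝕜 → 𝕜 → F} (hD : IsOffDiagExtension (slope f) D) :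
    D = dslope f := by
  ext x y
  obtain rfl | hxy := eq_or_ne x y
  · have hDx : Continuous (D x) := hD.1.comp (Continuous.prodMk_right x)
    have hderiv : HasDerivAt f (D x x) x :=
      hasDerivAt_iff_tendsto_slope.2 <| (hDx.continuousAt.mono_left nhdsWithin_le_nhds).congr' <| by
        filter_upwards [self_mem_nhdsWithin] with y hy using hD.2 x y (Ne.symm hy)
    rw [dslope_same, hderiv.deriv]
  · rw [hD.2 x y hxy, dslope_of_ne f hxy.symm]

end Slope

section RCLike

variable {𝕜 F : Type*} [RCLike 𝕜] [NormedAddCommGroup F] [NormedSpace 𝕜 F]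

theorem contDiff_one_iff_continuous_dslope {f : 𝕜 → F} :
    ContDiff 𝕜 1 f ↔ Continuous (fun p : 𝕜 × 𝕜 => dslope f p.1 p.2) := by
  constructor
  · refine fun hf => continuous_iff_continuousAt.2 fun ⟨x, y⟩ => ?_
    obtain rfl | hxy := eq_or_ne x y
    · exact continuousAt_uncurry_dslope_same (hf.hasStrictDerivAt one_ne_zero)
        (hf.continuous_deriv le_rfl).continuousAt
    · exact continuousAt_uncurry_dslope_of_ne hf.continuous.continuousAt
        hf.continuous.continuousAt hxy
  · refine fun hc => contDiff_one_iff_deriv.2 ⟨fun x => ?_, ?_⟩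
    · have hx : Continuous (dslope f x) := hc.comp (Continuous.prodMk_right x)
      exact continuousAt_dslope_same.1 hx.continuousAt
    · simpa only [comp_def, id_eq, dslope_same] using! hc.comp (continuous_id.prodMk continuous_id)

theorem isOffDiagExtension_slope_iff {f : 𝕜 → F} {D : 𝕜 → 𝕜 → F} :
    IsOffDiagExtension (slope f) D ↔ ContDiff 𝕜 1 f ∧ D = dslope f := by
  rw [contDiff_one_iff_continuous_dslope]
  constructor
  · intro hD
    obtain rfl := hD.eq_dslope
    exact ⟨hD.1, rfl⟩
  · rintro ⟨hf, rfl⟩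
    exact ⟨hf, fun x y hxy => dslope_of_ne f hxy.symm⟩

end RCLike

theorem wedgeQuotient_eq_smul_slope {𝕜 K F : Type*} [Field 𝕜] [Field K] [AddCommGroup F]
    [Module 𝕜 F] [Module K F] [SMulCommClass 𝕜 K F] (f₁ : 𝕜 → F) {f₂ : 𝕜 → K}
    (hf₂ : ∀ x, f₂ x ≠ 0) :
    wedgeQuotient f₁ f₂ =
      fun x y => (f₂ x * f₂ y) • slope (fun t => (f₂ t)⁻¹ • f₁ t) x y := by
  ext x y
  have hx : (f₂ x * f₂ y) • (f₂ x)⁻¹ • f₁ x = f₂ y • f₁ x := by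
    rw [mul_comm, mul_smul, smul_inv_smul₀ (hf₂ x)]
  have hy : (f₂ x * f₂ y) • (f₂ y)⁻¹ • f₁ y = f₂ x • f₁ y := by
    rw [mul_smul, smul_inv_smul₀ (hf₂ y)]
  rw [wedgeQuotient, slope_comm, slope_def_module, ← smul_comm (x - y)⁻¹,
    smul_sub (f₂ x * f₂ y), hx, hy]

theorem isOffDiagExtension_wedgeQuotient_iff {𝕜 K F : Type*} [RCLike 𝕜] [NormedField K]
    [NormedAddCommGroup F] [NormedSpace 𝕜 F] [NormedSpace K F] [SMulCommClass 𝕜 K F]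
    {f₁ : 𝕜 → F} {f₂ : 𝕜 → K} {E : 𝕜 → 𝕜 → F} (hf₂ : Continuous f₂) (hf₂₀ : ∀ x, f₂ x ≠ 0) :
    IsOffDiagExtension (wedgeQuotient f₁ f₂) E ↔
      ContDiff 𝕜 1 (fun x => (f₂ x)⁻¹ • f₁ x) ∧
        E = fun x y => (f₂ x * f₂ y) • dslope (fun t => (f₂ t)⁻¹ • f₁ t) x y := by
  have hw₀ (x y : 𝕜) : f₂ x * f₂ y ≠ 0 := mul_ne_zero (hf₂₀ x) (hf₂₀ y)
  rw [wedgeQuotient_eq_smul_slope f₁ hf₂₀, isOffDiagExtension_smul_iff (by fun_prop) hw₀,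
    isOffDiagExtension_slope_iff]
  simp only [funext_iff, inv_smul_eq_iff₀ (hw₀ _ _)]

theorem ratio_extension_iff_C1_general {K F : Type*} [NormedField K] [NormedAddCommGroup F]
    [NormedSpace ℝ F] [NormedSpace K F] [SMulCommClass ℝ K F] [CompleteSpace F]
    (f₁ : ℝ → F) (f₂ : ℝ → K) (h₂ : Continuous f₂) (h₂₀ : ∀ x, f₂ x ≠ 0) :
    ((∃ E, IsOffDiagExtension (wedgeQuotient f₁ f₂) E) ↔
      ContDiff ℝ 1 (fun x => (f₂ x)⁻¹ • f₁ x)) ∧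
    ∀ E, IsOffDiagExtension (wedgeQuotient f₁ f₂) E → ∀ a b : ℝ,
      (f₂ b)⁻¹ • f₁ b - (f₂ a)⁻¹ • f₁ a = ∫ x in a..b, (f₂ x ^ 2)⁻¹ • E x x := by
  simp only [isOffDiagExtension_wedgeQuotient_iff h₂ h₂₀]
  refine ⟨by simp only [exists_and_left, exists_eq, and_true], ?_⟩
  rintro E ⟨hg, rfl⟩ a b
  simp only [dslope_same, ← sq, inv_smul_smul₀ (pow_ne_zero 2 (h₂₀ _))]
  exact (intervalIntegral.integral_deriv_eq_sub
    (fun x _ => hg.differentiable one_ne_zero x)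
    ((hg.continuous_deriv le_rfl).intervalIntegrable a b)).symm

/-- For continuous `f₁, f₂` with `f₂` strictly positive:
(i) the off-diagonal ratio `(f₁(x₁)f₂(x₂) − f₁(x₂)f₂(x₁))/(x₁ − x₂)` extends
continuously to ℝ² if and only if `f₁/f₂` is continuously differentiable; and
(ii) for any such continuous extension `E` and all `a, b`:
f₁(b)/f₂(b) − f₁(a)/f₂(a) = ∫_a^b E(x,x)/f₂(x)² dx. -/
theorem ratio_extension_iff_C1 (f₁ f₂ : ℝ → ℝ)
    (h₁ : Continuous f₁) (h₂ : Continuous f₂) (hpos : ∀ x : ℝ, 0 < f₂ x) :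
    ((∃ E : ℝ → ℝ → ℝ,
        Continuous (fun p : ℝ × ℝ => E p.1 p.2) ∧
        ∀ x₁ x₂ : ℝ, x₁ ≠ x₂ →
          E x₁ x₂ = (f₁ x₁ * f₂ x₂ - f₁ x₂ * f₂ x₁) / (x₁ - x₂)) ↔
      ContDiff ℝ 1 (fun x => f₁ x / f₂ x)) ∧
    ∀ E : ℝ → ℝ → ℝ,
      Continuous (fun p : ℝ × ℝ => E p.1 p.2) →
      (∀ x₁ x₂ : ℝ, x₁ ≠ x₂ →
        E x₁ x₂ = (f₁ x₁ * f₂ x₂ - f₁ x₂ * f₂ x₁) / (x₁ - x₂)) →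
      ∀ a b : ℝ,
        f₁ b / f₂ b - f₁ a / f₂ a = ∫ x in a..b, E x x / (f₂ x) ^ 2 := by
  simpa only [IsOffDiagExtension, wedgeQuotient, smul_eq_mul, div_eq_inv_mul, mul_comm (f₂ _),
      and_imp]
    using ratio_extension_iff_C1_general f₁ f₂ h₂ fun x => (hpos x).ne'
end

section
/- Let u : ℝ × ℝ → ℝ be smooth (infinitely differentiable). For n ≥ 1 define the bi-directional Wronskian τ_n(x,y) = det[∂_x^{i−1}∂_y^{j−1} u(x,y)]_{i,j=1}^n, and set τ_0 ≡ 1. Then for every n ≥ 1 and all (x,y) ∈ ℝ^2, the bilinear form of the two-dimensional Toda equation holds: τ_n(x,y)·∂_x∂_y τ_n(x,y) − (∂_x τ_n(x,y))·(∂_y τ_n(x,y)) = τ_{n−1}(x,y)·τ_{n+1}(x,y). -/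
/-- The mixed partial derivative ∂_x^i ∂_y^j u (x, y) of a function of two real
variables. -/
noncomputable def mixedDeriv (u : ℝ → ℝ → ℝ) (i j : ℕ) (x y : ℝ) : ℝ :=
  iteratedDeriv i (fun s => iteratedDeriv j (fun t => u s t) y) x

/-- The bi-directional Wronskian τ_n(x,y) = det[∂_x^{i−1} ∂_y^{j−1} u(x,y)]_{i,j=1}^n
(τ_0 ≡ 1, as the empty determinant). -/
noncomputable def biWronskian (u : ℝ → ℝ → ℝ) (n : ℕ) (x y : ℝ) : ℝ :=
  Matrix.det (Matrix.of fun i j : Fin n => mixedDeriv u (i : ℕ) (j : ℕ) x y)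

/-! Everything reduces to one matrix. Put `M = [∂_x^{i-1} ∂_y^{j-1} u]` of size `n + 1`. When `τ_n`
is differentiated column by column in `y`, every term but the last has two equal columns, so
`∂_y τ_n` is the minor of `M` with the last row and the penultimate column deleted. In the same way
`∂_x τ_n` and `∂_x ∂_y τ_n` are minors of `M`, and the Toda equation becomes the Desnanot–Jacobi
identity for the last two rows and columns of `M`. That identity is the `2 × 2` case of Sylvester's
determinant identity, which follows from block elimination once the determinant of the pivot block
is regular; the general case is the value at `X = 0` of the identity for the pivot `X + A`. -/

section SylvesterIdentity

open Matrix Polynomial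

variable {m n R : Type*} [Fintype m] [DecidableEq m] [CommRing R]

/-- The matrix of bordered minors of `M`: the entry `(i, j)` is the determinant of the pivot block
`M.toBlocks₁₁` bordered by row `i` and column `j` of the remaining blocks. -/
def borderedMinors (M : Matrix (m ⊕ n) (m ⊕ n) R) : Matrix n n R :=
  of fun i j => (M.submatrix (Sum.map id fun _ : Fin 1 => i) (Sum.map id fun _ : Fin 1 => j)).det

lemma borderedMinors_map {S : Type*} [CommRing S] (f : R →+* S) (M : Matrix (m ⊕ n) (m ⊕ n) R) :
    borderedMinors (M.map f) = (borderedMinors M).map f := by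
  ext i j
  simp only [borderedMinors, of_apply, map_apply, RingHom.map_det, RingHom.mapMatrix_apply,
    submatrix_map]

lemma det_pow_card_mul_det_fromBlocks [Fintype n] [DecidableEq n] (A : Matrix m m R)
    (B : Matrix m n R) (C : Matrix n m R) (D : Matrix n n R) :
    A.det ^ Fintype.card n * (fromBlocks A B C D).det =
      A.det * (A.det • D - C * A.adjugate * B).det := by
  have elimination : fromBlocks 1 0 (-(C * A.adjugate)) (A.det • 1) * fromBlocks A B C D =
      fromBlocks A B 0 (A.det • D - C * A.adjugate * B) := by
    simp [fromBlocks_multiply, Matrix.mul_assoc, adjugate_mul, sub_eq_neg_add]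
  simpa using congrArg det elimination

lemma borderedMinors_fromBlocks_of_isRegular {A : Matrix m m R} (hA : IsRegular A.det)
    (B : Matrix m n R) (C : Matrix n m R) (D : Matrix n n R) :
    borderedMinors (fromBlocks A B C D) = A.det • D - C * A.adjugate * B := by
  ext i j
  have blocks : (fromBlocks A B C D).submatrix (Sum.map id fun _ : Fin 1 => i)
      (Sum.map id fun _ : Fin 1 => j) = fromBlocks A (B.submatrix id fun _ => j)
        (C.submatrix (fun _ => i) id) (D.submatrix (fun _ => i) fun _ => j) := by
    ext (_ | _) (_ | _) <;> rfl
  have schur := det_pow_card_mul_det_fromBlocks A (B.submatrix id fun _ : Fin 1 => j)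
    (C.submatrix (fun _ : Fin 1 => i) id) (D.submatrix (fun _ => i) fun _ => j)
  rw [Fintype.card_fin, pow_one, det_fin_one] at schur
  rw [borderedMinors, of_apply, blocks, hA.left schur]
  rfl

lemma det_borderedMinors_of_isRegular [Fintype n] [DecidableEq n] [Nonempty n]
    {M : Matrix (m ⊕ n) (m ⊕ n) R} (hM : IsRegular M.toBlocks₁₁.det) :
    (borderedMinors M).det = M.toBlocks₁₁.det ^ (Fintype.card n - 1) * M.det := by
  apply hM.left
  have schur := det_pow_card_mul_det_fromBlocks M.toBlocks₁₁ M.toBlocks₁₂ M.toBlocks₂₁ M.toBlocks₂₂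
  rw [← borderedMinors_fromBlocks_of_isRegular hM, fromBlocks_toBlocks] at schur
  simp only [← schur, ← mul_assoc, mul_pow_sub_one Fintype.card_ne_zero]

/-- **Sylvester's determinant identity**. -/
theorem det_borderedMinors [Fintype n] [DecidableEq n] [Nonempty n]
    (M : Matrix (m ⊕ n) (m ⊕ n) R) :
    (borderedMinors M).det = M.toBlocks₁₁.det ^ (Fintype.card n - 1) * M.det := by
  let P : Matrix (m ⊕ n) (m ⊕ n) R[X] := fromBlocks (charmatrix (-M.toBlocks₁₁))
    (M.toBlocks₁₂.map C) (M.toBlocks₂₁.map C) (M.toBlocks₂₂.map C)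
  have eval_pivot : (charmatrix (-M.toBlocks₁₁)).map (evalRingHom 0) = M.toBlocks₁₁ := by
    ext i j
    simp [charmatrix_apply, diagonal_apply, apply_ite]
  have eval_P : P.map (evalRingHom 0) = M := by
    rw [fromBlocks_map, eval_pivot, ← fromBlocks_toBlocks M]
    ext (_ | _) (_ | _) <;> simp
  have pivot_regular : IsRegular P.toBlocks₁₁.det := (charpoly_monic (-M.toBlocks₁₁)).isRegular
  have := congrArg (evalRingHom 0) (det_borderedMinors_of_isRegular pivot_regular)
  simpa only [map_mul, map_pow, RingHom.map_det, RingHom.mapMatrix_apply, ← borderedMinors_map,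
    eval_P, P, toBlocks_fromBlocks₁₁, eval_pivot] using this

theorem desnanot_jacobi_s14 {k : ℕ} (M : Matrix (Fin (k + 2)) (Fin (k + 2)) R) :
    (M.submatrix Fin.castSucc Fin.castSucc).det *
          (M.submatrix (Fin.last k).castSucc.succAbove (Fin.last k).castSucc.succAbove).det -
        (M.submatrix (Fin.last k).castSucc.succAbove Fin.castSucc).det *
          (M.submatrix Fin.castSucc (Fin.last k).castSucc.succAbove).det =
      (M.submatrix (Fin.castAdd 2) (Fin.castAdd 2)).det * M.det := by
  let e : Fin k ⊕ Fin 2 ≃ Fin (k + 2) := finSumFinEquiv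
  let e₁ : Fin k ⊕ Fin 1 ≃ Fin (k + 1) := finSumFinEquiv
  have border_zero : e ∘ Sum.map id (fun _ : Fin 1 => 0) = Fin.castSucc ∘ e₁ := by
    ext (_ | _) <;> simp [e, e₁]
  have border_one : e ∘ Sum.map id (fun _ : Fin 1 => 1) =
      (Fin.last k).castSucc.succAbove ∘ e₁ := by
    ext (_ | _) <;> simp [e, e₁, Fin.succAbove, Fin.lt_def]
  have sylvester := det_borderedMinors (M.submatrix e e)
  simp only [det_fin_two, borderedMinors, of_apply, submatrix_submatrix, border_zero, border_one]
    at sylvester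
  simp only [← submatrix_submatrix, det_submatrix_equiv_self] at sylvester
  rw [mul_comm (M.submatrix (Fin.last k).castSucc.succAbove Fin.castSucc).det, sylvester,
    Fintype.card_fin, pow_one]
  rfl

end SylvesterIdentity

section MixedDerivative

open Function
open scoped ContDiff

variable {𝕜 E F : Type*} [NontriviallyNormedField 𝕜] [NormedAddCommGroup E] [NormedSpace 𝕜 E]
  [NormedAddCommGroup F] [NormedSpace 𝕜 F] {f : E → F}

variable (𝕜) in
/-- The derivative of `f` in the direction `v`, as an operator on functions, so that mixed partial
derivatives are composites of its iterates. It is read off from `fderiv`, hence meaningful only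
where `f` is differentiable. -/
noncomputable def dirDeriv (v : E) (f : E → F) : E → F := fun p => fderiv 𝕜 f p v

lemma contDiff_dirDeriv (hf : ContDiff 𝕜 ∞ f) (v : E) : ContDiff 𝕜 ∞ (dirDeriv 𝕜 v f) :=
  (hf.fderiv_right le_rfl).clm_apply contDiff_const

lemma contDiff_iterate_dirDeriv (hf : ContDiff 𝕜 ∞ f) (v : E) (k : ℕ) :
    ContDiff 𝕜 ∞ ((dirDeriv 𝕜 v)^[k] f) := by
  induction k with
  | zero => exact hf
  | succ k ih => simpa only [iterate_succ_apply'] using contDiff_dirDeriv ih v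

lemma hasDerivAt_comp_line {p v : E} {t : 𝕜} (hf : DifferentiableAt 𝕜 f (p + t • v)) :
    HasDerivAt (fun s => f (p + s • v)) (dirDeriv 𝕜 v f (p + t • v)) t := by
  have line : HasDerivAt (fun s : 𝕜 => p + s • v) v t := by
    simpa using ((hasDerivAt_id t).smul_const v).const_add p
  exact hf.hasFDerivAt.comp_hasDerivAt t line

lemma iteratedDeriv_comp_line (hf : ContDiff 𝕜 ∞ f) (p v : E) (k : ℕ) :
    iteratedDeriv k (fun t : 𝕜 => f (p + t • v)) =
      fun t => (dirDeriv 𝕜 v)^[k] f (p + t • v) := by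
  induction k with
  | zero => simp
  | succ k ih =>
    ext t
    have smooth := contDiff_iterate_dirDeriv hf v k
    rw [iteratedDeriv_succ, ih, iterate_succ_apply',
      (hasDerivAt_comp_line (smooth.differentiable (by simp) _)).deriv]

lemma dirDeriv_comm [IsRCLikeNormedField 𝕜] (hf : ContDiff 𝕜 2 f) (v w : E) :
    dirDeriv 𝕜 v (dirDeriv 𝕜 w f) = dirDeriv 𝕜 w (dirDeriv 𝕜 v f) := by
  ext p
  have differentiable : DifferentiableAt 𝕜 (fderiv 𝕜 f) p :=
    (hf.fderiv_right (m := 1) (by norm_num)).differentiable (by simp) p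
  have second_deriv (a b : E) :
      dirDeriv 𝕜 a (dirDeriv 𝕜 b f) p = fderiv 𝕜 (fderiv 𝕜 f) p a b := by
    unfold dirDeriv
    simp [fderiv_clm_apply differentiable (differentiableAt_const b)]
  have symmetric : IsSymmSndFDerivAt 𝕜 f p := hf.contDiffAt.isSymmSndFDerivAt (by simp)
  rw [second_deriv, second_deriv, symmetric.eq]

lemma dirDeriv_iterate_comm [IsRCLikeNormedField 𝕜] (hf : ContDiff 𝕜 ∞ f) (v w : E) (k : ℕ) :
    dirDeriv 𝕜 v ((dirDeriv 𝕜 w)^[k] f) = (dirDeriv 𝕜 w)^[k] (dirDeriv 𝕜 v f) := by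
  induction k with
  | zero => rfl
  | succ k ih =>
    have smooth := contDiff_iterate_dirDeriv hf w k
    rw [iterate_succ_apply', iterate_succ_apply', dirDeriv_comm (smooth.of_le ENat.LEInfty.out), ih]

variable {u : ℝ → ℝ → ℝ}

lemma mixedDeriv_eq_iterate_dirDeriv (hu : ContDiff ℝ ∞ (uncurry u)) (i j : ℕ) (x y : ℝ) :
    mixedDeriv u i j x y =
      (dirDeriv ℝ (1, 0))^[i] ((dirDeriv ℝ (0, 1))^[j] (uncurry u)) (x, y) := by
  have inner (s : ℝ) : iteratedDeriv j (fun t => u s t) y =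
      (dirDeriv ℝ (0, 1))^[j] (uncurry u) (s, y) := by
    simpa using congrFun (iteratedDeriv_comp_line hu (s, 0) (0, 1) j) y
  have outer := congrFun
    (iteratedDeriv_comp_line (contDiff_iterate_dirDeriv hu (0, 1) j) (0, y) (1, 0) i) x
  simpa [mixedDeriv, inner] using outer

lemma hasDerivAt_mixedDeriv_left (hu : ContDiff ℝ ∞ (uncurry u)) (i j : ℕ) (x y : ℝ) :
    HasDerivAt (fun s => mixedDeriv u i j s y) (mixedDeriv u (i + 1) j x y) x := by
  have smooth := contDiff_iterate_dirDeriv (contDiff_iterate_dirDeriv hu (0, 1) j) (1, 0) i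
  simpa [mixedDeriv_eq_iterate_dirDeriv hu, iterate_succ_apply' _ i] using
    hasDerivAt_comp_line (p := (0, y)) (v := (1, 0)) (t := x) (smooth.differentiable (by simp) _)

lemma hasDerivAt_mixedDeriv_right (hu : ContDiff ℝ ∞ (uncurry u)) (i j : ℕ) (x y : ℝ) :
    HasDerivAt (fun t => mixedDeriv u i j x t) (mixedDeriv u i (j + 1) x y) y := by
  have smooth := contDiff_iterate_dirDeriv (contDiff_iterate_dirDeriv hu (0, 1) j) (1, 0) i
  simpa [mixedDeriv_eq_iterate_dirDeriv hu, iterate_succ_apply' _ j,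
    dirDeriv_iterate_comm (contDiff_iterate_dirDeriv hu _ j)] using
    hasDerivAt_comp_line (p := (x, 0)) (v := (0, 1)) (t := y) (smooth.differentiable (by simp) _)

end MixedDerivative

section DeterminantDerivative

open Matrix

variable {𝕜 R : Type*} [NontriviallyNormedField 𝕜] [NormedCommRing R] [NormedAlgebra 𝕜 R]

lemma hasDerivAt_det {ι : Type*} [Fintype ι] [DecidableEq ι] {M : 𝕜 → Matrix ι ι R}
    {M' : Matrix ι ι R} {x : 𝕜} (h : ∀ i j, HasDerivAt (fun s => M s i j) (M' i j) x) :
    HasDerivAt (fun s => (M s).det) (∑ k, ((M x).updateCol k (M'.col k)).det) x := by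
  simp only [det_apply']
  rw [Finset.sum_comm]
  refine HasDerivAt.fun_sum fun σ _ => ?_
  rw [← Finset.mul_sum]
  refine ((HasDerivAt.fun_finsetProd fun i _ => h (σ i) i).congr_deriv ?_).const_mul _
  refine Finset.sum_congr rfl fun k _ => ?_
  rw [← Finset.prod_erase_mul _ _ (Finset.mem_univ k), updateCol_self, smul_eq_mul, col_apply]
  congr 1
  exact Finset.prod_congr rfl fun j hj => by rw [updateCol_ne (Finset.ne_of_mem_erase hj)]

lemma hasDerivAt_det_shift_col {k : ℕ} {w : Fin (k + 1) → ℕ → 𝕜 → R} {x : 𝕜}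
    (hw : ∀ i j, HasDerivAt (w i j) (w i (j + 1) x) x) :
    HasDerivAt (fun s => (of fun i j : Fin (k + 1) => w i j s).det)
      (of fun i j : Fin (k + 1) => w i ((Fin.last k).castSucc.succAbove j) x).det x := by
  let M (s : 𝕜) : Matrix (Fin (k + 1)) (Fin (k + 1)) R := of fun i j => w i j s
  let M' : Matrix (Fin (k + 1)) (Fin (k + 1)) R := of fun i j => w i (j + 1) x
  have expansion : HasDerivAt (fun s => (M s).det) (∑ l, ((M x).updateCol l (M'.col l)).det) x :=
    hasDerivAt_det fun i j => hw i j
  have repeated_column (l : Fin k) :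
      ((M x).updateCol l.castSucc (M'.col l.castSucc)).det = 0 :=
    det_zero_of_column_eq l.castSucc_lt_succ.ne fun i => by
      simp [updateCol_ne l.castSucc_lt_succ.ne', M, M']
  have last_column : (M x).updateCol (Fin.last k) (M'.col (Fin.last k)) =
      of fun i j => w i ((Fin.last k).castSucc.succAbove j) x := by
    ext i j
    induction j using Fin.lastCases <;> simp [Fin.succAbove, Fin.lt_def, M, M']
  rwa [Fin.sum_univ_castSucc, Finset.sum_eq_zero fun l _ => repeated_column l, zero_add,
    last_column] at expansion

lemma hasDerivAt_det_shift_row {k : ℕ} {w : ℕ → Fin (k + 1) → 𝕜 → R} {x : 𝕜}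
    (hw : ∀ i j, HasDerivAt (w i j) (w (i + 1) j x) x) :
    HasDerivAt (fun s => (of fun i j : Fin (k + 1) => w i j s).det)
      (of fun i j : Fin (k + 1) => w ((Fin.last k).castSucc.succAbove i) j x).det x := by
  simp only [← det_transpose (of _)]
  exact hasDerivAt_det_shift_col (w := fun i j => w j i) fun i j => hw j i

/-- The tau function of a table `f` of functions of two variables: the leading `n × n` minor. For
the table of mixed derivatives of `u` it is `biWronskian u n`; an arbitrary table keeps the
bilinear identity free of smoothness assumptions. -/
def tauFunction (f : ℕ → ℕ → 𝕜 → 𝕜 → R) (n : ℕ) (x y : 𝕜) : R :=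
  (of fun i j : Fin n => f i j x y).det

theorem toda_bilinear_general (f : ℕ → ℕ → 𝕜 → 𝕜 → R)
    (hfx : ∀ i j x y, HasDerivAt (fun s => f i j s y) (f (i + 1) j x y) x)
    (hfy : ∀ i j x y, HasDerivAt (fun t => f i j x t) (f i (j + 1) x y) y)
    (n : ℕ) (hn : 1 ≤ n) (x y : 𝕜) :
    tauFunction f n x y * deriv (fun s => deriv (fun t => tauFunction f n s t) y) x -
        deriv (fun s => tauFunction f n s y) x * deriv (fun t => tauFunction f n x t) y =
      tauFunction f (n - 1) x y * tauFunction f (n + 1) x y := by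
  obtain ⟨k, rfl⟩ := Nat.exists_eq_add_of_le' hn
  let q : Fin (k + 1) → Fin (k + 2) := (Fin.last k).castSucc.succAbove
  have deriv_y (s : 𝕜) : deriv (fun t => tauFunction f (k + 1) s t) y =
      (of fun i j : Fin (k + 1) => f i (q j) s y).det :=
    (hasDerivAt_det_shift_col fun i j => hfy i j s y).deriv
  have deriv_x (c : Fin (k + 1) → ℕ) :
      deriv (fun s => (of fun i j : Fin (k + 1) => f i (c j) s y).det) x =
        (of fun i j : Fin (k + 1) => f (q i) (c j) x y).det :=
    (hasDerivAt_det_shift_row fun i j => hfx i (c j) x y).deriv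
  have tau_x : deriv (fun s => tauFunction f (k + 1) s y) x =
      (of fun i j : Fin (k + 1) => f (q i) j x y).det := deriv_x _
  simp only [deriv_y, deriv_x, tau_x]
  exact desnanot_jacobi_s14 (of fun i j : Fin (k + 2) => f i j x y)

end DeterminantDerivative

/-- For smooth `u`, the bi-directional Wronskians satisfy the bilinear form of the
two-dimensional Toda equation:
τ_n ∂_x∂_y τ_n − (∂_x τ_n)(∂_y τ_n) = τ_{n−1} τ_{n+1}. -/
theorem toda_bilinear (u : ℝ → ℝ → ℝ)
    (hu : ContDiff ℝ (⊤ : ℕ∞) (fun p : ℝ × ℝ => u p.1 p.2)) :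
    ∀ n : ℕ, 1 ≤ n → ∀ x y : ℝ,
      biWronskian u n x y *
          deriv (fun s => deriv (fun t => biWronskian u n s t) y) x -
        deriv (fun s => biWronskian u n s y) x *
          deriv (fun t => biWronskian u n x t) y =
      biWronskian u (n - 1) x y * biWronskian u (n + 1) x y :=
  toda_bilinear_general (mixedDeriv u) (hasDerivAt_mixedDeriv_left hu)
    (hasDerivAt_mixedDeriv_right hu)
end
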